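/- Assume: if t₀ = min 𝕋 then f satisfies (H∞), (H^rd_loc-Lip) and (H^forw_stab); if t₀ = max 𝕋 then f satisfies (H∞), (H^ld_loc-Lip) and (H^back_regr); if t₀ ≠ inf 𝕋 and t₀ ≠ sup 𝕋 then f satisfies (H∞), (H^rd_loc-Lip), (H^forw_stab), (H^ld_loc-Lip) and (H^back_regr). Then the non shifted Δ-Cauchy problem (Δ-CP) has a unique maximal solution (q,I_𝕋); moreover, (q,I_𝕋) is an extension of every other solution of (Δ-CP). -/

import Mathlib

/-!
Why the theorem is true. Call `IsArc` a solution of `q^Δ = f(q,t)` on `[a,b]_𝕋` without initial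
condition: absolutely continuous, satisfying the jump relation `q(σ(t)) = q(t) + μ(t) f(q(t),t)` at
right-scattered points and the differential equation at almost every right-dense point. Everything
is read off through `ae_delta_iff`: a property holds Δ-a.e. iff it holds at every right-scattered
point and Lebesgue-a.e. on `𝕋`.

*Uniqueness.* A mean value inequality (`mean_value`) bounds increments of an absolutely continuous
function by its jumps and Δ-derivatives. On a short interval where `f` is Lipschitz, it forces the
difference of two arcs to be bounded by half its own maximum (`IsArc.eq_of_short`). Induction on the
time scale propagates this: forward (`IsArc.eq_forward`), values after a jump are determined by
values before it; backward (`IsArc.eq_backward`), jumps are inverted by the injectivity of `G⁺(t)`.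

*Local existence.* At a right-scattered `t₀` the forward solution is the single jump, which stays in
`Ω` by forward stability; to the left of a left-scattered `t₀` it comes from the surjectivity of
`G⁺(ρ(t₀))`. At dense points the Picard operator is used. Composing with `tsFloor`, the map
`τ ↦ max (𝕋 ∩ [a,τ])`, turns the Δ-integral into a Lebesgue integral on `[a,b]`, so that a
fixed point of a contraction on `C([a,b], B̄(x₀,R))` restricts to an arc (`exists_isArc_of_short`).

*Largest solution.* By uniqueness all solutions agree on common domains, so they patch together to a
function on the union `J` of their intervals. This function is a solution (`exists_largest`) and
extends every other one, whence it is maximal and unique as such. One point needs attention: since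
functions are defined on all of `ℝ`, Δ-differentiability at a right-scattered minimum of `J ∩ 𝕋`
includes left-continuity there, and hence involves values outside `J`; those values are copied
from one of the solutions.
-/

open MeasureTheory Set Filter Classical

noncomputable section
open scoped Classical

/-- The forward jump operator `σ` of a time scale `T`. -/
def tsSigma (T : Set ℝ) (t : ℝ) : ℝ :=
  if ({s | s ∈ T ∧ t < s}).Nonempty then sInf {s | s ∈ T ∧ t < s} else t

/-- The backward jump operator `ρ` of a time scale `T`. -/
def tsRho (T : Set ℝ) (t : ℝ) : ℝ :=
  if ({s | s ∈ T ∧ s < t}).Nonempty then sSup {s | s ∈ T ∧ s < t} else t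

/-- The graininess function `μ(t) = σ(t) - t`. -/
def tsGrain (T : Set ℝ) (t : ℝ) : ℝ := tsSigma T t - t

/-- `t` is a right-scattered point of `T`. -/
def RightScattered (T : Set ℝ) (t : ℝ) : Prop := t < tsSigma T t

/-- `t` is a right-dense point of `T`. -/
def RightDense (T : Set ℝ) (t : ℝ) : Prop := tsSigma T t = t

/-- `t` is a left-scattered point of `T`. -/
def LeftScattered (T : Set ℝ) (t : ℝ) : Prop := tsRho T t < t

/-- `t` is a left-dense point of `T`. -/
def LeftDense (T : Set ℝ) (t : ℝ) : Prop := tsRho T t = t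

/-- `𝕋 \ {sup 𝕋}`: the time scale minus its maximum (if the maximum exists). -/
def tsUpDomain (T : Set ℝ) : Set ℝ := {t | t ∈ T ∧ ¬ IsGreatest T t}

/-- The Lebesgue Δ-measure on the time scale `T`: Lebesgue measure restricted to `T`
plus `Σ_{r ∈ ℛ} μ(r)·δ_r` over right-scattered points `r`. -/
def deltaMeasure (T : Set ℝ) : Measure ℝ :=
  volume.restrict T +
    Measure.sum (fun r : {t : ℝ // t ∈ T ∧ RightScattered T t} =>
      ENNReal.ofReal (tsGrain T r.1) • Measure.dirac r.1)

/-- Δ-differentiability of `q` at `t`, with Δ-derivative `q'`. -/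
def HasDeltaDerivAt {n : ℕ} (T : Set ℝ) (q : ℝ → EuclideanSpace ℝ (Fin n))
    (q' : EuclideanSpace ℝ (Fin n)) (t : ℝ) : Prop :=
  ∀ ε > (0:ℝ), ∃ U ∈ nhds t, ∀ s ∈ U ∩ T,
    ‖q (tsSigma T t) - q s - (tsSigma T t - s) • q'‖ ≤ ε * |tsSigma T t - s|

/-- Absolute continuity of `q` on `[a,b]_𝕋`. -/
def DeltaAC {n : ℕ} (T : Set ℝ) (a b : ℝ) (q : ℝ → EuclideanSpace ℝ (Fin n)) : Prop :=
  ∀ ε > (0:ℝ), ∃ δ > (0:ℝ), ∀ (m : ℕ) (u v : ℕ → ℝ),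
    (∀ k < m, u k ∈ Icc a b ∩ T) → (∀ k < m, v k ∈ Icc a b ∩ T) →
    (∀ k < m, u k ≤ v k) →
    (∀ i < m, ∀ j < m, i ≠ j → Disjoint (Icc (u i) (v i)) (Icc (u j) (v j))) →
    (∑ k ∈ Finset.range m, (v k - u k)) < δ →
    (∑ k ∈ Finset.range m, ‖q (v k) - q (u k)‖) < ε

/-- `f` is a Δ-Carathéodory function on `Ω × 𝕋\{sup 𝕋}`. -/
def DeltaCaratheodory {n : ℕ} (T : Set ℝ) (Ω : Set (EuclideanSpace ℝ (Fin n)))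
    (f : EuclideanSpace ℝ (Fin n) → ℝ → EuclideanSpace ℝ (Fin n)) : Prop :=
  (∀ x ∈ Ω, AEMeasurable (fun t => f x t) ((deltaMeasure T).restrict (tsUpDomain T))) ∧
    ∀ᵐ t ∂((deltaMeasure T).restrict (tsUpDomain T)), ContinuousOn (fun x => f x t) Ω

/-- Hypothesis (H∞): `f` is locally bounded. -/
def HInfty {n : ℕ} (T : Set ℝ) (Ω : Set (EuclideanSpace ℝ (Fin n)))
    (f : EuclideanSpace ℝ (Fin n) → ℝ → EuclideanSpace ℝ (Fin n)) : Prop :=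
  ∀ K : Set (EuclideanSpace ℝ (Fin n)), K ⊆ Ω → IsCompact K →
    ∀ a ∈ T, ∀ b ∈ T, a < b →
      ∃ M : ℝ, 0 ≤ M ∧
        ∀ᵐ t ∂((deltaMeasure T).restrict (Ico a b ∩ T)), ∀ x ∈ K, ‖f x t‖ ≤ M

/-- Hypothesis (H^rd_loc-Lip): local Lipschitz continuity at right-dense points. -/
def HrdLocLip {n : ℕ} (T : Set ℝ) (Ω : Set (EuclideanSpace ℝ (Fin n)))
    (f : EuclideanSpace ℝ (Fin n) → ℝ → EuclideanSpace ℝ (Fin n)) : Prop :=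
  ∀ xb ∈ Ω, ∀ tb ∈ T, ¬ IsGreatest T tb → RightDense T tb →
    ∃ R > (0:ℝ), ∃ δ > (0:ℝ), ∃ L : ℝ, 0 ≤ L ∧
      Metric.closedBall xb R ⊆ Ω ∧ tb + δ ∈ T ∧
      ∀ᵐ t ∂((deltaMeasure T).restrict (Ico tb (tb + δ) ∩ T)),
        ∀ x₁ ∈ Metric.closedBall xb R, ∀ x₂ ∈ Metric.closedBall xb R,
          ‖f x₁ t - f x₂ t‖ ≤ L * ‖x₁ - x₂‖

/-- Hypothesis (H^ld_loc-Lip): local Lipschitz continuity at left-dense points. -/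
def HldLocLip {n : ℕ} (T : Set ℝ) (Ω : Set (EuclideanSpace ℝ (Fin n)))
    (f : EuclideanSpace ℝ (Fin n) → ℝ → EuclideanSpace ℝ (Fin n)) : Prop :=
  ∀ xb ∈ Ω, ∀ tb ∈ T, ¬ IsLeast T tb → LeftDense T tb →
    ∃ R > (0:ℝ), ∃ δ > (0:ℝ), ∃ L : ℝ, 0 ≤ L ∧
      Metric.closedBall xb R ⊆ Ω ∧ tb - δ ∈ T ∧
      ∀ᵐ t ∂((deltaMeasure T).restrict (Ico (tb - δ) tb ∩ T)),
        ∀ x₁ ∈ Metric.closedBall xb R, ∀ x₂ ∈ Metric.closedBall xb R,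
          ‖f x₁ t - f x₂ t‖ ≤ L * ‖x₁ - x₂‖

/-- Hypothesis (H^forw_stab): `G⁺(t) : x ↦ x + μ(t) f(x,t)` maps `Ω` into `Ω`. -/
def HforwStab {n : ℕ} (T : Set ℝ) (Ω : Set (EuclideanSpace ℝ (Fin n)))
    (f : EuclideanSpace ℝ (Fin n) → ℝ → EuclideanSpace ℝ (Fin n)) : Prop :=
  ∀ t ∈ T, RightScattered T t → ∀ x ∈ Ω, x + tsGrain T t • f x t ∈ Ω

/-- Hypothesis (H^back_regr): `G⁺(t)` is a bijection from `Ω` onto `ℝⁿ`. -/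
def HbackRegr {n : ℕ} (T : Set ℝ) (Ω : Set (EuclideanSpace ℝ (Fin n)))
    (f : EuclideanSpace ℝ (Fin n) → ℝ → EuclideanSpace ℝ (Fin n)) : Prop :=
  ∀ t ∈ T, RightScattered T t → Set.BijOn (fun x => x + tsGrain T t • f x t) Ω univ

/-- Hypothesis (H^back_stab): `G⁻(t) : x ↦ x - μ(t) f(x,t)` maps `Ω` into `Ω`. -/
def HbackStab {n : ℕ} (T : Set ℝ) (Ω : Set (EuclideanSpace ℝ (Fin n)))
    (f : EuclideanSpace ℝ (Fin n) → ℝ → EuclideanSpace ℝ (Fin n)) : Prop :=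
  ∀ t ∈ T, RightScattered T t → ∀ x ∈ Ω, x - tsGrain T t • f x t ∈ Ω

/-- Hypothesis (H^forw_regr): `G⁻(t)` is a bijection from `Ω` onto `ℝⁿ`. -/
def HforwRegr {n : ℕ} (T : Set ℝ) (Ω : Set (EuclideanSpace ℝ (Fin n)))
    (f : EuclideanSpace ℝ (Fin n) → ℝ → EuclideanSpace ℝ (Fin n)) : Prop :=
  ∀ t ∈ T, RightScattered T t → Set.BijOn (fun x => x - tsGrain T t • f x t) Ω univ

/-- Hypothesis (H^glob_Lip): global Lipschitz continuity. -/
def HglobLip {n : ℕ} (T : Set ℝ) (Ω : Set (EuclideanSpace ℝ (Fin n)))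
    (f : EuclideanSpace ℝ (Fin n) → ℝ → EuclideanSpace ℝ (Fin n)) : Prop :=
  ∃ L : ℝ, 0 ≤ L ∧
    ∀ᵐ t ∂((deltaMeasure T).restrict (tsUpDomain T)),
      ∀ x₁ ∈ Ω, ∀ x₂ ∈ Ω, ‖f x₁ t - f x₂ t‖ ≤ L * ‖x₁ - x₂‖

/-- The relation `a ⊴ t₀ ⊴ b`. -/
def Trile (T : Set ℝ) (t₀ a b : ℝ) : Prop :=
  (IsLeast T t₀ ∧ a = t₀ ∧ t₀ < b) ∨
  (IsGreatest T t₀ ∧ a < t₀ ∧ t₀ = b) ∨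
  (¬ IsLeast T t₀ ∧ ¬ IsGreatest T t₀ ∧ a < t₀ ∧ t₀ < b)

/-- `(q, [a,b]_𝕋)` is a solution of the non shifted Δ-Cauchy problem (Δ-CP). -/
def IsSolIcc {n : ℕ} (T : Set ℝ) (Ω : Set (EuclideanSpace ℝ (Fin n)))
    (f : EuclideanSpace ℝ (Fin n) → ℝ → EuclideanSpace ℝ (Fin n))
    (t₀ : ℝ) (q₀ : EuclideanSpace ℝ (Fin n))
    (q : ℝ → EuclideanSpace ℝ (Fin n)) (a b : ℝ) : Prop :=
  (∀ t ∈ Icc a b ∩ T, q t ∈ Ω) ∧ DeltaAC T a b q ∧ q t₀ = q₀ ∧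
    ∀ᵐ t ∂((deltaMeasure T).restrict (Ico a b ∩ T)),
      HasDeltaDerivAt T q (f (q t) t) t

/-- `(q, [a,b]_𝕋)` is a solution of the shifted Δ-Cauchy problem (Δ-CP^σ). -/
def IsSolIccS {n : ℕ} (T : Set ℝ) (Ω : Set (EuclideanSpace ℝ (Fin n)))
    (f : EuclideanSpace ℝ (Fin n) → ℝ → EuclideanSpace ℝ (Fin n))
    (t₀ : ℝ) (q₀ : EuclideanSpace ℝ (Fin n))
    (q : ℝ → EuclideanSpace ℝ (Fin n)) (a b : ℝ) : Prop :=
  (∀ t ∈ Icc a b ∩ T, q t ∈ Ω) ∧ DeltaAC T a b q ∧ q t₀ = q₀ ∧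
    ∀ᵐ t ∂((deltaMeasure T).restrict (Ico a b ∩ T)),
      HasDeltaDerivAt T q (f (q (tsSigma T t)) t) t

/-- `I_𝕋 ∈ 𝕀`: `I` is a real interval containing points `a, b` of `T` with `a ⊴ t₀ ⊴ b`. -/
def MemI (T : Set ℝ) (t₀ : ℝ) (I : Set ℝ) : Prop :=
  I.OrdConnected ∧ ∃ a ∈ I ∩ T, ∃ b ∈ I ∩ T, Trile T t₀ a b

/-- `(q, I_𝕋)` is a solution of (Δ-CP). -/
def IsSol {n : ℕ} (T : Set ℝ) (Ω : Set (EuclideanSpace ℝ (Fin n)))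
    (f : EuclideanSpace ℝ (Fin n) → ℝ → EuclideanSpace ℝ (Fin n))
    (t₀ : ℝ) (q₀ : EuclideanSpace ℝ (Fin n))
    (q : ℝ → EuclideanSpace ℝ (Fin n)) (I : Set ℝ) : Prop :=
  MemI T t₀ I ∧ (∀ t ∈ I ∩ T, q t ∈ Ω) ∧
    ∀ a ∈ I ∩ T, ∀ b ∈ I ∩ T, Trile T t₀ a b → IsSolIcc T Ω f t₀ q₀ q a b

/-- `(q, I_𝕋)` is a solution of (Δ-CP^σ). -/
def IsSolS {n : ℕ} (T : Set ℝ) (Ω : Set (EuclideanSpace ℝ (Fin n)))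
    (f : EuclideanSpace ℝ (Fin n) → ℝ → EuclideanSpace ℝ (Fin n))
    (t₀ : ℝ) (q₀ : EuclideanSpace ℝ (Fin n))
    (q : ℝ → EuclideanSpace ℝ (Fin n)) (I : Set ℝ) : Prop :=
  MemI T t₀ I ∧ (∀ t ∈ I ∩ T, q t ∈ Ω) ∧
    ∀ a ∈ I ∩ T, ∀ b ∈ I ∩ T, Trile T t₀ a b → IsSolIccS T Ω f t₀ q₀ q a b

/-- `(q₁, I₁_𝕋)` is an extension of `(q, I_𝕋)`. -/
def SolExtends {n : ℕ} (T : Set ℝ) (q₁ : ℝ → EuclideanSpace ℝ (Fin n)) (I₁ : Set ℝ)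
    (q : ℝ → EuclideanSpace ℝ (Fin n)) (I : Set ℝ) : Prop :=
  I ∩ T ⊆ I₁ ∩ T ∧ EqOn q₁ q (I ∩ T)

/-- `(q, I_𝕋)` is a maximal solution of (Δ-CP). -/
def IsMaxSol {n : ℕ} (T : Set ℝ) (Ω : Set (EuclideanSpace ℝ (Fin n)))
    (f : EuclideanSpace ℝ (Fin n) → ℝ → EuclideanSpace ℝ (Fin n))
    (t₀ : ℝ) (q₀ : EuclideanSpace ℝ (Fin n))
    (q : ℝ → EuclideanSpace ℝ (Fin n)) (I : Set ℝ) : Prop :=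
  IsSol T Ω f t₀ q₀ q I ∧
    ∀ q₁ I₁, IsSol T Ω f t₀ q₀ q₁ I₁ → SolExtends T q₁ I₁ q I → I₁ ∩ T = I ∩ T

/-- `(q, I_𝕋)` is a maximal solution of (Δ-CP^σ). -/
def IsMaxSolS {n : ℕ} (T : Set ℝ) (Ω : Set (EuclideanSpace ℝ (Fin n)))
    (f : EuclideanSpace ℝ (Fin n) → ℝ → EuclideanSpace ℝ (Fin n))
    (t₀ : ℝ) (q₀ : EuclideanSpace ℝ (Fin n))
    (q : ℝ → EuclideanSpace ℝ (Fin n)) (I : Set ℝ) : Prop :=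
  IsSolS T Ω f t₀ q₀ q I ∧
    ∀ q₁ I₁, IsSolS T Ω f t₀ q₀ q₁ I₁ → SolExtends T q₁ I₁ q I → I₁ ∩ T = I ∩ T

/-! ### Jump operators and induction on a time scale -/

lemma sigma_le {T : Set ℝ} {t s : ℝ} (hs : s ∈ T) (h : t < s) : tsSigma T t ≤ s := by
  have hne : ({s | s ∈ T ∧ t < s}).Nonempty := ⟨s, hs, h⟩
  unfold tsSigma
  rw [if_pos hne]
  exact csInf_le ⟨t, fun x hx => hx.2.le⟩ ⟨hs, h⟩

lemma le_sigma (T : Set ℝ) (t : ℝ) : t ≤ tsSigma T t := by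
  unfold tsSigma
  split_ifs with h
  · exact le_csInf h fun x hx => hx.2.le
  · exact le_rfl

lemma RightScattered.nonempty {T : Set ℝ} {t : ℝ} (h : RightScattered T t) :
    ({s | s ∈ T ∧ t < s}).Nonempty := by
  by_contra hne
  unfold RightScattered tsSigma at h
  rw [if_neg hne] at h
  exact lt_irrefl _ h

lemma sigma_mem {T : Set ℝ} (hT : IsClosed T) {t : ℝ} (h : RightScattered T t) :
    tsSigma T t ∈ T := by
  have hne := h.nonempty
  unfold tsSigma
  rw [if_pos hne]
  have h1 : sInf {s | s ∈ T ∧ t < s} ∈ closure {s | s ∈ T ∧ t < s} :=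
    csInf_mem_closure hne ⟨t, fun x hx => hx.2.le⟩
  have h2 : closure {s | s ∈ T ∧ t < s} ⊆ T :=
    closure_minimal (fun x hx => hx.1) hT
  exact h2 h1

lemma rightScattered_or_rightDense (T : Set ℝ) (t : ℝ) : RightScattered T t ∨ RightDense T t := by
  rcases (le_sigma T t).lt_or_eq with h | h
  · exact Or.inl h
  · exact Or.inr h.symm

lemma RightDense.exists_near {T : Set ℝ} {t : ℝ} (h : RightDense T t)
    (hne : ∃ s ∈ T, t < s) {c : ℝ} (hc : t < c) : ∃ u ∈ T, t < u ∧ u < c := by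
  have hne' : ({s | s ∈ T ∧ t < s}).Nonempty := hne
  unfold RightDense tsSigma at h
  rw [if_pos hne'] at h
  obtain ⟨u, hu, huc⟩ := exists_lt_of_csInf_lt hne' (h.trans_lt hc)
  exact ⟨u, hu.1, hu.2, huc⟩

/-- A point approximated by `T` from the right is right-dense. -/
lemma RightDense.of_near {T : Set ℝ} {t : ℝ}
    (h : ∀ c, t < c → ∃ u ∈ T, t < u ∧ u < c) : RightDense T t := by
  rcases rightScattered_or_rightDense T t with h1 | h1
  · obtain ⟨u, hu, htu, huc⟩ := h _ h1
    exact absurd (sigma_le hu htu) (not_le.2 huc)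
  · exact h1

lemma rightScattered_of_gap {T : Set ℝ} {p τ b : ℝ} (hb : b ∈ T) (hτb : τ < b) (hpτ : p < τ)
    (hgap : ∀ s ∈ T, s ≤ τ → s ≤ p) : RightScattered T p ∧ τ ≤ tsSigma T p := by
  have hne : ({s | s ∈ T ∧ p < s}).Nonempty := ⟨b, hb, hpτ.trans hτb⟩
  have h : τ ≤ tsSigma T p := by
    unfold tsSigma
    rw [if_pos hne]
    refine le_csInf hne fun s hs => ?_
    by_contra hlt
    exact absurd (hgap s hs.1 (not_le.1 hlt).le) (not_le.2 hs.2)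
  exact ⟨hpτ.trans_le h, h⟩

lemma leftDense_near {T : Set ℝ} {t : ℝ} (h : LeftDense T t)
    (hne : ∃ s ∈ T, s < t) {c : ℝ} (hc : c < t) : ∃ u ∈ T, c < u ∧ u < t := by
  have hne' : ({s | s ∈ T ∧ s < t}).Nonempty := hne
  unfold LeftDense tsRho at h
  rw [if_pos hne'] at h
  obtain ⟨u, hu, huc⟩ := exists_lt_of_lt_csSup hne' (hc.trans_eq h.symm)
  exact ⟨u, hu.1, huc, hu.2⟩

/-- Just to the left of a point `t` that is not the minimum, either `T` accumulates at `t`, or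
`t = σ(p)` for a right-scattered `p`. -/
lemma left_cases {T : Set ℝ} (hT : IsClosed T) {t : ℝ} (ht : t ∈ T) (hne : ∃ s ∈ T, s < t) :
    LeftDense T t ∨ ∃ p ∈ T, RightScattered T p ∧ tsSigma T p = t := by
  have hne' : ({s | s ∈ T ∧ s < t}).Nonempty := hne
  have hbd : BddAbove {s | s ∈ T ∧ s < t} := ⟨t, fun x hx => hx.2.le⟩
  have hrho : tsRho T t = sSup {s | s ∈ T ∧ s < t} := by
    unfold tsRho; rw [if_pos hne']
  have hle : tsRho T t ≤ t := by
    rw [hrho]; exact csSup_le hne' fun x hx => hx.2.le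
  rcases hle.lt_or_eq with h | h
  swap
  · exact Or.inl h
  right
  have hmem : tsRho T t ∈ T := by
    rw [hrho]
    exact closure_minimal (fun x hx => hx.1) hT (csSup_mem_closure hne' hbd)
  have hle' : tsSigma T (tsRho T t) ≤ t := sigma_le ht h
  have hge : t ≤ tsSigma T (tsRho T t) := by
    have hne2 : ({s | s ∈ T ∧ tsRho T t < s}).Nonempty := ⟨t, ht, h⟩
    unfold tsSigma
    rw [if_pos hne2]
    refine le_csInf hne2 fun s hs => ?_
    by_contra hlt
    have : s ≤ tsRho T t := by rw [hrho]; exact le_csSup hbd ⟨hs.1, not_le.1 hlt⟩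
    exact absurd this (not_le.2 hs.2)
  exact ⟨_, hmem, h.trans_le hge, le_antisymm hle' hge⟩

lemma exists_gt_of_not_greatest {T : Set ℝ} {t : ℝ} (ht : t ∈ T) (h : ¬ IsGreatest T t) :
    ∃ s ∈ T, t < s := by
  by_contra hc
  push Not at hc
  exact h ⟨ht, fun s hs => hc s hs⟩

lemma exists_lt_of_not_least {T : Set ℝ} {t : ℝ} (ht : t ∈ T) (h : ¬ IsLeast T t) :
    ∃ s ∈ T, s < t := by
  by_contra hc
  push Not at hc
  exact h ⟨ht, fun s hs => hc s hs⟩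

/-- Induction principle on `[a,b]_𝕋`: a property holding at `a`, propagating a little to the right
of each point, and surviving limits from the left, holds everywhere. -/
lemma ts_induction {T : Set ℝ} (hT : IsClosed T) {a b : ℝ} (ha : a ∈ T) (P : ℝ → Prop)
    (h0 : P a)
    (hstep : ∀ t ∈ T, a ≤ t → t < b → P t → ∃ s ∈ T, t < s ∧ ∀ u ∈ T, t < u → u ≤ s → P u)
    (hlim : ∀ t ∈ T, a < t → t ≤ b → (∀ u ∈ T, a ≤ u → u < t → P u) →
      (∀ c < t, ∃ u ∈ T, c < u ∧ u < t) → P t) (hb : b ∈ T) :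
    ∀ t ∈ T, a ≤ t → t ≤ b → P t := by
  intro t₁ ht₁ hat₁ ht₁b
  have hab : a ≤ b := hat₁.trans ht₁b
  let S : Set ℝ := {t | t ∈ T ∧ a ≤ t ∧ t ≤ b ∧ ∀ u ∈ T, a ≤ u → u ≤ t → P u}
  have hSa : a ∈ S := ⟨ha, le_rfl, hab, fun u _ h1 h2 => by rwa [le_antisymm h2 h1]⟩
  have hSne : S.Nonempty := ⟨a, hSa⟩
  have hSbd : BddAbove S := ⟨b, fun t ht => ht.2.2.1⟩
  set c := sSup S with hc
  have hcT : c ∈ T := closure_minimal (fun x hx => hx.1) hT (csSup_mem_closure hSne hSbd)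
  have hac : a ≤ c := le_csSup hSbd hSa
  have hcb : c ≤ b := csSup_le hSne fun t ht => ht.2.2.1
  have hlt : ∀ u ∈ T, a ≤ u → u < c → P u := by
    intro u hu hau huc
    obtain ⟨t, ht, hut⟩ := exists_lt_of_lt_csSup hSne huc
    exact ht.2.2.2 u hu hau hut.le
  have hPc : P c := by
    by_cases hcS : c ∈ S
    · exact hcS.2.2.2 c hcT hac le_rfl
    · have hac' : a < c := lt_of_le_of_ne hac (fun h => hcS (h ▸ hSa))
      refine hlim c hcT hac' hcb hlt fun d hd => ?_
      obtain ⟨t, ht, hut⟩ := exists_lt_of_lt_csSup hSne hd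
      exact ⟨t, ht.1, hut, lt_of_le_of_ne (le_csSup hSbd ht) (fun h => hcS (h ▸ ht))⟩
  have hle : ∀ u ∈ T, a ≤ u → u ≤ c → P u := by
    intro u hu hau huc
    rcases huc.lt_or_eq with h | h
    · exact hlt u hu hau h
    · rwa [h]
  rcases hcb.lt_or_eq with hcb' | hcb'
  · exfalso
    obtain ⟨s, hs, hcs, hPs⟩ := hstep c hcT hac hcb' hPc
    have hmin : min s b ∈ S := by
      refine ⟨?_, ?_, min_le_right _ _, fun u hu hau hus => ?_⟩
      · rcases min_choice s b with h | h <;> rw [h] <;> assumption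
      · exact le_min (hac.trans hcs.le) hab
      · rcases le_or_gt u c with h | h
        · exact hle u hu hau h
        · exact hPs u hu h (hus.trans (min_le_left _ _))
    exact absurd (le_csSup hSbd hmin) (not_le.2 (lt_min hcs hcb'))
  · exact hle t₁ ht₁ hat₁ (hcb' ▸ ht₁b)

/-- The mirror image of `ts_induction`. -/
lemma ts_induction_back {T : Set ℝ} (hT : IsClosed T) {a b : ℝ} (hb : b ∈ T) (P : ℝ → Prop)
    (h0 : P b)
    (hstep : ∀ t ∈ T, a < t → t ≤ b → P t → ∃ s ∈ T, s < t ∧ ∀ u ∈ T, s ≤ u → u < t → P u)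
    (hlim : ∀ t ∈ T, a ≤ t → t < b → (∀ u ∈ T, t < u → u ≤ b → P u) →
      (∀ c, t < c → ∃ u ∈ T, t < u ∧ u < c) → P t) (ha : a ∈ T) :
    ∀ t ∈ T, a ≤ t → t ≤ b → P t := by
  have hT' : IsClosed (-T) := hT.neg
  have key := ts_induction (T := -T) hT' (a := -b) (b := -a) (by simpa using hb)
    (fun t => P (-t)) (by simpa using h0) ?_ ?_ (by simpa using ha)
  · intro t ht hat htb
    have := key (-t) (by simpa using ht) (by linarith) (by linarith)
    simpa using this
  · intro t ht hbt hta hPt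
    obtain ⟨s, hs, hst, hP⟩ := hstep (-t) ht (by linarith) (by linarith) hPt
    exact ⟨-s, by simpa using hs, by linarith, fun u hu h1 h2 =>
      hP (-u) hu (by linarith) (by linarith)⟩
  · intro t ht hbt hta hP hnear
    refine hlim (-t) ht (by linarith) (by linarith) (fun u hu h1 h2 => ?_) (fun c hc => ?_)
    · have := hP (-u) (by simpa using hu) (by linarith) (by linarith)
      simpa using this
    · obtain ⟨u, hu, h1, h2⟩ := hnear (-c) (by linarith)
      exact ⟨-u, hu, by linarith, by linarith⟩

/-! ### Null sets of the Δ-measure -/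

lemma countable_rightScattered (T : Set ℝ) : {t : ℝ | t ∈ T ∧ RightScattered T t}.Countable := by
  refine (countable_setOfPred_isolated_right_within (s := T)).mono ?_
  rintro t ⟨ht, hrs⟩
  refine ⟨ht, ?_⟩
  rw [← Filter.empty_mem_iff_bot]
  refine mem_nhdsWithin.2 ⟨Iio (tsSigma T t), isOpen_Iio, hrs, fun s hs => ?_⟩
  exact absurd (sigma_le hs.2.1 hs.2.2) (not_le.2 hs.1)

/-- A property holds Δ-a.e. on `[a,b)_𝕋` iff it holds Lebesgue-a.e. on `[a,b)_𝕋` and at every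
right-scattered point of `[a,b)_𝕋`. -/
lemma ae_delta_iff {T : Set ℝ} (hT : IsClosed T) (a b : ℝ) (P : ℝ → Prop) :
    (∀ᵐ t ∂((deltaMeasure T).restrict (Ico a b ∩ T)), P t) ↔
      (∀ᵐ t, t ∈ Ico a b ∩ T → P t) ∧ ∀ t ∈ Ico a b ∩ T, RightScattered T t → P t := by
  have hm : MeasurableSet (Ico a b ∩ T) := measurableSet_Ico.inter hT.measurableSet
  have : Countable {t : ℝ // t ∈ T ∧ RightScattered T t} := (countable_rightScattered T).to_subtype
  rw [ae_restrict_iff' hm]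
  unfold deltaMeasure
  rw [ae_add_measure_iff, Measure.ae_sum_iff, ae_restrict_iff' hT.measurableSet]
  refine and_congr ⟨fun h => ?_, fun h => ?_⟩ ⟨fun h t ht hrs => ?_, fun h r => ?_⟩
  · filter_upwards [h] with t ht h2 using ht h2.2 h2
  · filter_upwards [h] with t ht h2 h3 using ht h3
  · have h1 := h ⟨t, ht.2, hrs⟩
    have hpos : ENNReal.ofReal (tsGrain T t) ≠ 0 := by
      have : 0 < tsGrain T t := sub_pos.2 hrs
      simpa using this
    rw [Measure.ae_ennreal_smul_measure_iff hpos, ae_dirac_eq] at h1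
    exact h1 ht
  · refine Measure.ae_smul_measure ?_ _
    rw [ae_dirac_eq]
    exact fun hr => h r.1 hr r.2.2

/-! ### Δ-derivatives and Δ-absolute continuity -/

section
variable {n : ℕ}

lemma HasDeltaDerivAt.sub {T : Set ℝ} {p q : ℝ → EuclideanSpace ℝ (Fin n)}
    {p' q' : EuclideanSpace ℝ (Fin n)} {t : ℝ}
    (hp : HasDeltaDerivAt T p p' t) (hq : HasDeltaDerivAt T q q' t) :
    HasDeltaDerivAt T (fun s => p s - q s) (p' - q') t := by
  intro ε hε
  obtain ⟨U, hU, h1⟩ := hp (ε / 2) (by positivity)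
  obtain ⟨V, hV, h2⟩ := hq (ε / 2) (by positivity)
  refine ⟨U ∩ V, Filter.inter_mem hU hV, fun s hs => ?_⟩
  have h1 := h1 s ⟨hs.1.1, hs.2⟩
  have h2 := h2 s ⟨hs.1.2, hs.2⟩
  calc _ = ‖(p (tsSigma T t) - p s - (tsSigma T t - s) • p') -
        (q (tsSigma T t) - q s - (tsSigma T t - s) • q')‖ := by
        congr 1; module
    _ ≤ _ := norm_sub_le _ _
    _ ≤ ε * |tsSigma T t - s| := by linarith

/-- At a right-scattered point, Δ-differentiability means continuity, and the derivative is the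
difference quotient of the jump. -/
lemma hasDeltaDerivAt_rs {T : Set ℝ} {q : ℝ → EuclideanSpace ℝ (Fin n)}
    {q' : EuclideanSpace ℝ (Fin n)} {t : ℝ} (ht : t ∈ T) (hrs : RightScattered T t) :
    HasDeltaDerivAt T q q' t ↔
      q (tsSigma T t) = q t + tsGrain T t • q' ∧ ContinuousWithinAt q (T ∩ Iic t) t := by
  have hpos : 0 < tsSigma T t - t := sub_pos.2 hrs
  constructor
  · intro h
    have h1 : q (tsSigma T t) = q t + tsGrain T t • q' := by
      have : ∀ ε > (0:ℝ), ‖q (tsSigma T t) - q t - (tsSigma T t - t) • q'‖ ≤ ε := by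
        intro ε hε
        obtain ⟨U, hU, hs⟩ := h (ε / (tsSigma T t - t)) (by positivity)
        have := hs t ⟨mem_of_mem_nhds hU, ht⟩
        rwa [abs_of_pos hpos, div_mul_cancel₀ _ hpos.ne'] at this
      have h0 : ‖q (tsSigma T t) - q t - (tsSigma T t - t) • q'‖ ≤ 0 :=
        le_of_forall_pos_le_add fun ε hε => by simpa using this ε hε
      have := norm_le_zero_iff.1 h0
      unfold tsGrain
      rw [sub_sub, sub_eq_zero] at this
      exact this
    refine ⟨h1, ?_⟩
    rw [Metric.continuousWithinAt_iff]
    intro ε hε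
    have hK : 0 < ‖q'‖ + 1 := by positivity
    obtain ⟨U, hU, hs⟩ := h (ε / 2 / (tsSigma T t - t + 1)) (by positivity)
    obtain ⟨δ, hδ, hball⟩ := Metric.mem_nhds_iff.1 hU
    refine ⟨min δ (min 1 (ε / 2 / (‖q'‖ + 1))), by positivity, fun {s} hsT hd => ?_⟩
    have hd1 := hd.trans_le (min_le_left _ _)
    have hd2 := hd.trans_le ((min_le_right _ _).trans (min_le_left _ _))
    have hd3 := hd.trans_le ((min_le_right _ _).trans (min_le_right _ _))
    have hb := hs s ⟨hball hd1, hsT.1⟩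
    rw [Real.dist_eq] at hd2 hd3
    have hst : s ≤ t := hsT.2
    rw [abs_sub_comm, abs_of_nonneg (sub_nonneg.2 hst)] at hd2 hd3
    have habs : |tsSigma T t - s| < tsSigma T t - t + 1 := by
      rw [abs_of_nonneg (by linarith)]; linarith
    have e1 : q t - q s = (q (tsSigma T t) - q s - (tsSigma T t - s) • q') + (t - s) • q' := by
      rw [h1]; unfold tsGrain; module
    rw [dist_comm, dist_eq_norm, e1]
    have b1 : ‖q (tsSigma T t) - q s - (tsSigma T t - s) • q'‖ < ε / 2 := by
      refine hb.trans_lt ?_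
      calc _ < ε / 2 / (tsSigma T t - t + 1) * (tsSigma T t - t + 1) := by gcongr
        _ = ε / 2 := by field_simp
    have b2 : ‖(t - s) • q'‖ ≤ ε / 2 := by
      rw [norm_smul, Real.norm_of_nonneg (sub_nonneg.2 hst)]
      calc _ ≤ ε / 2 / (‖q'‖ + 1) * (‖q'‖ + 1) := by gcongr; linarith
        _ = ε / 2 := by field_simp
    exact (norm_add_le _ _).trans_lt (by linarith)
  · rintro ⟨h1, h2⟩ ε hε
    rw [Metric.continuousWithinAt_iff] at h2
    have hK : 0 < ‖q'‖ + 1 := by positivity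
    obtain ⟨δ, hδ, h3⟩ := h2 (ε * (tsSigma T t - t) / 2) (by positivity)
    refine ⟨Iio (tsSigma T t) ∩ Metric.ball t (min δ (ε * (tsSigma T t - t) / 2 / (‖q'‖ + 1))),
      Filter.inter_mem (Iio_mem_nhds hrs) (Metric.ball_mem_nhds _ (by positivity)), ?_⟩
    rintro s ⟨⟨hs1, hs2⟩, hsT⟩
    have hst : s ≤ t := by
      by_contra hc
      exact absurd (sigma_le hsT (not_le.1 hc)) (not_le.2 hs1)
    rw [Metric.mem_ball] at hs2
    have hd1 := hs2.trans_le (min_le_left _ _)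
    have hd2 := hs2.trans_le (min_le_right _ _)
    rw [Real.dist_eq, abs_sub_comm, abs_of_nonneg (sub_nonneg.2 hst)] at hd2
    have hq := h3 ⟨hsT, hst⟩ hd1
    rw [dist_comm, dist_eq_norm] at hq
    have e1 : q (tsSigma T t) - q s - (tsSigma T t - s) • q' = (q t - q s) - (t - s) • q' := by
      rw [h1]; unfold tsGrain; module
    have b2 : ‖(t - s) • q'‖ ≤ ε * (tsSigma T t - t) / 2 := by
      rw [norm_smul, Real.norm_of_nonneg (sub_nonneg.2 hst)]
      calc _ ≤ ε * (tsSigma T t - t) / 2 / (‖q'‖ + 1) * (‖q'‖ + 1) := by gcongr; linarith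
        _ = _ := by field_simp
    rw [e1, abs_of_pos (by linarith)]
    calc _ ≤ ‖q t - q s‖ + ‖(t - s) • q'‖ := norm_sub_le _ _
      _ ≤ ε * (tsSigma T t - t) := by linarith
      _ ≤ _ := by gcongr

/-- Δ-differentiability at `t` only depends on the function on `T` near `t` and at `σ(t)`. -/
lemma HasDeltaDerivAt.congr {T : Set ℝ} {p q : ℝ → EuclideanSpace ℝ (Fin n)}
    {q' : EuclideanSpace ℝ (Fin n)} {t : ℝ} (hp : HasDeltaDerivAt T p q' t)
    {V : Set ℝ} (hV : V ∈ nhds t) (h1 : ∀ s ∈ V ∩ T, p s = q s)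
    (h2 : p (tsSigma T t) = q (tsSigma T t)) : HasDeltaDerivAt T q q' t := by
  intro ε hε
  obtain ⟨U, hU, hs⟩ := hp ε hε
  refine ⟨U ∩ V, Filter.inter_mem hU hV, fun s hs' => ?_⟩
  rw [← h1 s ⟨hs'.1.2, hs'.2⟩, ← h2]
  exact hs s ⟨hs'.1.1, hs'.2⟩

lemma DeltaAC.mono {T : Set ℝ} {a b a' b' : ℝ} {q : ℝ → EuclideanSpace ℝ (Fin n)}
    (h : DeltaAC T a b q) (ha : a ≤ a') (hb : b' ≤ b) : DeltaAC T a' b' q := by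
  intro ε hε
  obtain ⟨δ, hδ, H⟩ := h ε hε
  refine ⟨δ, hδ, fun m u v hu hv => H m u v (fun k hk => ?_) (fun k hk => ?_)⟩
  · exact ⟨Icc_subset_Icc ha hb (hu k hk).1, (hu k hk).2⟩
  · exact ⟨Icc_subset_Icc ha hb (hv k hk).1, (hv k hk).2⟩

lemma DeltaAC.congr {T : Set ℝ} {a b : ℝ} {p q : ℝ → EuclideanSpace ℝ (Fin n)}
    (h : DeltaAC T a b p) (hpq : ∀ t ∈ T, a ≤ t → t ≤ b → p t = q t) : DeltaAC T a b q := by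
  intro ε hε
  obtain ⟨δ, hδ, H⟩ := h ε hε
  refine ⟨δ, hδ, fun m u v hu hv h1 h2 h3 => ?_⟩
  rw [← Finset.sum_congr rfl fun k hk => ?_]
  · exact H m u v hu hv h1 h2 h3
  · have hk := Finset.mem_range.1 hk
    rw [hpq _ (hu k hk).2 (hu k hk).1.1 (hu k hk).1.2, hpq _ (hv k hk).2 (hv k hk).1.1 (hv k hk).1.2]

lemma DeltaAC.sub {T : Set ℝ} {a b : ℝ} {p q : ℝ → EuclideanSpace ℝ (Fin n)}
    (hp : DeltaAC T a b p) (hq : DeltaAC T a b q) : DeltaAC T a b (fun t => p t - q t) := by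
  intro ε hε
  obtain ⟨δ₁, hδ₁, H₁⟩ := hp (ε / 2) (by positivity)
  obtain ⟨δ₂, hδ₂, H₂⟩ := hq (ε / 2) (by positivity)
  refine ⟨min δ₁ δ₂, by positivity, fun m u v hu hv h1 h2 h3 => ?_⟩
  have b1 := H₁ m u v hu hv h1 h2 (h3.trans_le (min_le_left _ _))
  have b2 := H₂ m u v hu hv h1 h2 (h3.trans_le (min_le_right _ _))
  calc _ ≤ ∑ k ∈ Finset.range m, (‖p (v k) - p (u k)‖ + ‖q (v k) - q (u k)‖) := by
        refine Finset.sum_le_sum fun k _ => ?_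
        rw [show p (v k) - q (v k) - (p (u k) - q (u k)) =
          (p (v k) - p (u k)) - (q (v k) - q (u k)) by abel]
        exact norm_sub_le _ _
    _ < ε := by rw [Finset.sum_add_distrib]; linarith

lemma DeltaAC.of_lipschitz {T : Set ℝ} {a b M : ℝ} {q : ℝ → EuclideanSpace ℝ (Fin n)}
    (hM : 0 ≤ M)
    (h : ∀ s ∈ T, ∀ t ∈ T, a ≤ s → s ≤ t → t ≤ b → ‖q t - q s‖ ≤ M * (t - s)) :
    DeltaAC T a b q := by
  intro ε hε
  refine ⟨ε / (M + 1), by positivity, fun m u v hu hv h1 h2 h3 => ?_⟩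
  calc _ ≤ ∑ k ∈ Finset.range m, M * (v k - u k) := by
        refine Finset.sum_le_sum fun k hk => ?_
        have hk := Finset.mem_range.1 hk
        exact h _ (hu k hk).2 _ (hv k hk).2 (hu k hk).1.1 (h1 k hk) (hv k hk).1.2
    _ = M * ∑ k ∈ Finset.range m, (v k - u k) := by rw [Finset.mul_sum]
    _ ≤ M * (ε / (M + 1)) := by gcongr
    _ < ε := by rw [mul_div_assoc', div_lt_iff₀ (by positivity)]; linarith

lemma DeltaAC.continuousOn {T : Set ℝ} {a b : ℝ} {q : ℝ → EuclideanSpace ℝ (Fin n)}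
    (h : DeltaAC T a b q) : ContinuousOn q (Icc a b ∩ T) := by
  rw [Metric.continuousOn_iff]
  intro t ht ε hε
  obtain ⟨δ, hδ, H⟩ := h ε hε
  refine ⟨δ, hδ, fun s hs hd => ?_⟩
  have key : ∀ x ∈ Icc a b ∩ T, ∀ y ∈ Icc a b ∩ T, x ≤ y → y - x < δ → ‖q y - q x‖ < ε := by
    intro x hx y hy hxy hlt
    have := H 1 (fun _ => x) (fun _ => y) (fun _ _ => hx) (fun _ _ => hy) (fun _ _ => hxy)
      (fun i hi j hj hij => absurd (by omega) hij) (by simpa using hlt)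
    simpa using this
  rw [Real.dist_eq] at hd
  rw [dist_eq_norm]
  rcases le_total s t with hst | hst
  · rw [norm_sub_rev]
    exact key s hs t ht hst (by rw [abs_sub_comm, abs_of_nonneg (by linarith)] at hd; exact hd)
  · exact key t ht s hs hst (by rw [abs_of_nonneg (by linarith)] at hd; exact hd)

/-- Absolute continuity tested on families indexed by an arbitrary finite set. -/
lemma DeltaAC.finset {T : Set ℝ} {a b : ℝ} {q : ℝ → EuclideanSpace ℝ (Fin n)}
    (h : DeltaAC T a b q) {ε : ℝ} (hε : 0 < ε) :
    ∃ δ > (0:ℝ), ∀ (s : Finset ℕ) (u v : ℕ → ℝ),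
    (∀ k ∈ s, u k ∈ Icc a b ∩ T) → (∀ k ∈ s, v k ∈ Icc a b ∩ T) →
    (∀ k ∈ s, u k ≤ v k) →
    (∀ i ∈ s, ∀ j ∈ s, i ≠ j → Disjoint (Icc (u i) (v i)) (Icc (u j) (v j))) →
    (∑ k ∈ s, (v k - u k)) < δ →
    (∑ k ∈ s, ‖q (v k) - q (u k)‖) < ε := by
  obtain ⟨δ, hδ, H⟩ := h ε hε
  refine ⟨δ, hδ, fun s u v hu hv h1 h2 h3 => ?_⟩
  let e : ℕ → ℕ := fun k => if hk : k < s.card then (s.equivFin.symm ⟨k, hk⟩ : ℕ) else 0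
  have he : ∀ k < s.card, e k ∈ s := by
    intro k hk
    simp only [e, dif_pos hk]
    exact (s.equivFin.symm ⟨k, hk⟩).2
  have hsum : ∀ g : ℕ → ℝ, ∑ k ∈ Finset.range s.card, g (e k) = ∑ k ∈ s, g k := by
    intro g
    rw [Finset.sum_range, ← Finset.sum_coe_sort s g, ← Equiv.sum_comp s.equivFin.symm]
    refine Finset.sum_congr rfl fun k _ => ?_
    simp [e]
  have hinj : ∀ i < s.card, ∀ j < s.card, i ≠ j → e i ≠ e j := by
    intro i hi j hj hij heq
    simp only [e, dif_pos hi, dif_pos hj] at heq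
    have := s.equivFin.symm.injective (Subtype.ext heq)
    exact hij (by simpa using this)
  have := H s.card (fun k => u (e k)) (fun k => v (e k)) (fun k hk => hu _ (he k hk))
    (fun k hk => hv _ (he k hk)) (fun k hk => h1 _ (he k hk))
    (fun i hi j hj hij => h2 _ (he i hi) _ (he j hj) (hinj i hi j hj hij))
    (by rw [hsum fun k => v k - u k]; exact h3)
  rwa [hsum fun k => ‖q (v k) - q (u k)‖] at this

lemma DeltaAC.glue {T : Set ℝ} {a b c : ℝ} (hc : c ∈ T) {q : ℝ → EuclideanSpace ℝ (Fin n)}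
    (h1 : DeltaAC T a c q) (h2 : DeltaAC T c b q) : DeltaAC T a b q := by
  intro ε hε
  obtain ⟨δ₁, hδ₁, H₁⟩ := h1.finset (half_pos hε)
  obtain ⟨δ₂, hδ₂, H₂⟩ := h2.finset (half_pos hε)
  refine ⟨min δ₁ δ₂, by positivity, fun m u v hu hv huv hd hlt => ?_⟩
  have hminT : ∀ x ∈ T, min x c ∈ T := fun x hx => by
    rcases min_choice x c with h | h <;> rw [h] <;> assumption
  have hmaxT : ∀ x ∈ T, max x c ∈ T := fun x hx => by
    rcases max_choice x c with h | h <;> rw [h] <;> assumption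
  have b1 := H₁ ((Finset.range m).filter fun k => u k ≤ c) u (fun k => min (v k) c)
    (fun k hk => by
      simp only [Finset.mem_filter, Finset.mem_range] at hk
      exact ⟨⟨(hu k hk.1).1.1, hk.2⟩, (hu k hk.1).2⟩)
    (fun k hk => by
      simp only [Finset.mem_filter, Finset.mem_range] at hk
      exact ⟨⟨le_min (hv k hk.1).1.1 ((hu k hk.1).1.1.trans hk.2), min_le_right _ _⟩,
        hminT _ (hv k hk.1).2⟩)
    (fun k hk => by
      simp only [Finset.mem_filter, Finset.mem_range] at hk
      exact le_min (huv k hk.1) hk.2)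
    (fun i hi j hj hij => by
      simp only [Finset.mem_filter, Finset.mem_range] at hi hj
      exact (hd i hi.1 j hj.1 hij).mono (Icc_subset_Icc le_rfl (min_le_left _ _))
        (Icc_subset_Icc le_rfl (min_le_left _ _)))
    (by
      refine lt_of_le_of_lt ?_ (hlt.trans_le (min_le_left _ _))
      refine (Finset.sum_le_sum fun k _ => sub_le_sub_right (min_le_left (v k) c) (u k)).trans ?_
      refine Finset.sum_le_sum_of_subset_of_nonneg (Finset.filter_subset _ _) fun k hk _ => ?_
      exact sub_nonneg.2 (huv k (Finset.mem_range.1 hk)))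
  have b2 := H₂ ((Finset.range m).filter fun k => c ≤ v k) (fun k => max (u k) c) v
    (fun k hk => by
      simp only [Finset.mem_filter, Finset.mem_range] at hk
      exact ⟨⟨le_max_right _ _, max_le (hu k hk.1).1.2 (hk.2.trans (hv k hk.1).1.2)⟩,
        hmaxT _ (hu k hk.1).2⟩)
    (fun k hk => by
      simp only [Finset.mem_filter, Finset.mem_range] at hk
      exact ⟨⟨hk.2, (hv k hk.1).1.2⟩, (hv k hk.1).2⟩)
    (fun k hk => by
      simp only [Finset.mem_filter, Finset.mem_range] at hk
      exact max_le (huv k hk.1) hk.2)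
    (fun i hi j hj hij => by
      simp only [Finset.mem_filter, Finset.mem_range] at hi hj
      exact (hd i hi.1 j hj.1 hij).mono (Icc_subset_Icc (le_max_left _ _) le_rfl)
        (Icc_subset_Icc (le_max_left _ _) le_rfl))
    (by
      refine lt_of_le_of_lt ?_ (hlt.trans_le (min_le_right _ _))
      refine (Finset.sum_le_sum fun k _ => sub_le_sub_left (le_max_left (u k) c) (v k)).trans ?_
      refine Finset.sum_le_sum_of_subset_of_nonneg (Finset.filter_subset _ _) fun k hk _ => ?_
      exact sub_nonneg.2 (huv k (Finset.mem_range.1 hk)))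
  rw [Finset.sum_filter] at b1 b2
  refine lt_of_le_of_lt ?_ ((add_lt_add b1 b2).trans_eq (add_halves ε))
  rw [← Finset.sum_add_distrib]
  refine Finset.sum_le_sum fun k hk => ?_
  have huvk := huv k (Finset.mem_range.1 hk)
  rcases le_total (u k) c with h | h <;> rcases le_total c (v k) with h' | h'
  · rw [if_pos h, if_pos h', min_eq_right h', max_eq_right h]
    rw [add_comm]
    refine le_trans (le_of_eq ?_) (norm_add_le _ _)
    congr 1; abel
  · rw [if_pos h, min_eq_left h']
    refine le_add_of_nonneg_right ?_
    split_ifs <;> positivity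
  · rw [if_pos h', max_eq_left h]
    refine le_add_of_nonneg_left ?_
    split_ifs <;> positivity
  · have e1 : u k = c := le_antisymm (huvk.trans h') h
    have e2 : v k = c := le_antisymm h' (h.trans huvk)
    rw [e1, e2]; simp

/-! ### The mean value inequality -/

/-- The values `∑ ‖r (v k) - r (u k)‖` over finite families of consecutive non-degenerate intervals
with endpoints in `[a,t]_𝕋` that are contained in `U`; their supremum is the variation of `r` on
`[a,t]_𝕋 ∩ U`. -/
def varSums (T U : Set ℝ) (r : ℝ → EuclideanSpace ℝ (Fin n)) (a t : ℝ) : Set ℝ :=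
  {x | ∃ (m : ℕ) (u v : ℕ → ℝ),
    (∀ k < m, a ≤ u k ∧ u k < v k ∧ v k ≤ t ∧ u k ∈ T ∧ v k ∈ T ∧ Icc (u k) (v k) ⊆ U) ∧
    (∀ i j, i < j → j < m → v i ≤ u j) ∧ x = ∑ k ∈ Finset.range m, ‖r (v k) - r (u k)‖}

lemma zero_mem_varSums (T U : Set ℝ) (r : ℝ → EuclideanSpace ℝ (Fin n)) (a t : ℝ) :
    0 ∈ varSums T U r a t :=
  ⟨0, fun _ => 0, fun _ => 0, by simp, by simp, by simp⟩

lemma varSums_mono (T U : Set ℝ) (r : ℝ → EuclideanSpace ℝ (Fin n)) (a : ℝ) {s t : ℝ}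
    (h : s ≤ t) : varSums T U r a s ⊆ varSums T U r a t := by
  rintro x ⟨m, u, v, h1, h2, h3⟩
  refine ⟨m, u, v, fun k hk => ?_, h2, h3⟩
  obtain ⟨e1, e2, e3, e4⟩ := h1 k hk
  exact ⟨e1, e2, e3.trans h, e4⟩

lemma varSums_add {T U : Set ℝ} {r : ℝ → EuclideanSpace ℝ (Fin n)} {a s t x : ℝ}
    (has : a ≤ s) (hst : s < t) (hs : s ∈ T) (ht : t ∈ T) (hU : Icc s t ⊆ U)
    (hx : x ∈ varSums T U r a s) : x + ‖r t - r s‖ ∈ varSums T U r a t := by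
  obtain ⟨m, u, v, h1, h2, h3⟩ := hx
  refine ⟨m + 1, fun k => if k < m then u k else s, fun k => if k < m then v k else t,
    fun k hk => ?_, fun i j hij hj => ?_, ?_⟩
  · by_cases hkm : k < m
    · obtain ⟨e1, e2, e3, e4⟩ := h1 k hkm
      simp only [if_pos hkm]
      exact ⟨e1, e2, e3.trans hst.le, e4⟩
    · simp only [if_neg hkm]
      exact ⟨has, hst, le_rfl, hs, ht, hU⟩
  · have him : i < m := by omega
    simp only [if_pos him]
    split_ifs with hjm
    · exact h2 i j hij hjm
    · exact (h1 i him).2.2.1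
  · rw [Finset.sum_range_succ, h3]
    congr 1
    · refine Finset.sum_congr rfl fun k hk => ?_
      simp [Finset.mem_range.1 hk]
    · simp

/-- If `r` is absolutely continuous, its variation inside an open set of small measure is small.
Consecutive intervals may share an endpoint, so those with even and odd index are
treated separately. -/
lemma varSums_le {T : Set ℝ} {a b : ℝ} {r : ℝ → EuclideanSpace ℝ (Fin n)}
    (h : DeltaAC T a b r) {ε : ℝ} (hε : 0 < ε) :
    ∃ δ > (0:ℝ), ∀ U : Set ℝ, volume U < ENNReal.ofReal δ →
      ∀ x ∈ varSums T U r a b, x ≤ 2 * ε := by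
  obtain ⟨δ, hδ, H⟩ := h.finset hε
  refine ⟨δ, hδ, fun U hU x hx => ?_⟩
  obtain ⟨m, u, v, h1, h2, rfl⟩ := hx
  have key : ∀ s : Finset ℕ, s ⊆ Finset.range m →
      (∀ i ∈ s, ∀ j ∈ s, i < j → i + 1 < j) → ∑ k ∈ s, ‖r (v k) - r (u k)‖ < ε := by
    intro s hs hgap
    have hs' : ∀ k ∈ s, k < m := fun k hk => Finset.mem_range.1 (hs hk)
    have hlt : ∀ i ∈ s, ∀ j ∈ s, i < j → v i < u j := by
      intro i hi j hj hij
      have h3 := hgap i hi j hj hij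
      have hj' := hs' j hj
      exact (h2 i (i+1) (by omega) (by omega)).trans_lt
        ((h1 (i+1) (by omega)).2.1.trans_le (h2 (i+1) j h3 hj'))
    have hdisj : ∀ i ∈ s, ∀ j ∈ s, i ≠ j → Disjoint (Icc (u i) (v i)) (Icc (u j) (v j)) := by
      intro i hi j hj hij
      rw [Set.disjoint_left]
      intro y hy hy'
      rcases lt_or_gt_of_ne hij with h | h
      · have := hlt i hi j hj h; linarith [hy.2, hy'.1]
      · have := hlt j hj i hi h; linarith [hy.1, hy'.2]
    refine H s u v (fun k hk => ?_) (fun k hk => ?_) (fun k hk => (h1 k (hs' k hk)).2.1.le) hdisj ?_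
    · obtain ⟨e1, e2, e3, e4, e5, e6⟩ := h1 k (hs' k hk)
      exact ⟨⟨e1, e2.le.trans e3⟩, e4⟩
    · obtain ⟨e1, e2, e3, e4, e5, e6⟩ := h1 k (hs' k hk)
      exact ⟨⟨e1.trans e2.le, e3⟩, e5⟩
    · have hvol : volume (⋃ k ∈ s, Icc (u k) (v k)) = ∑ k ∈ s, ENNReal.ofReal (v k - u k) := by
        rw [measure_biUnion_finset (fun i hi j hj hij => hdisj i hi j hj hij)
          (fun k _ => measurableSet_Icc)]
        simp
      have hsub : (⋃ k ∈ s, Icc (u k) (v k)) ⊆ U :=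
        Set.iUnion₂_subset fun k hk => (h1 k (hs' k hk)).2.2.2.2.2
      have := (measure_mono hsub).trans_lt hU
      rw [hvol, ← ENNReal.ofReal_sum_of_nonneg
        (fun k hk => sub_nonneg.2 (h1 k (hs' k hk)).2.1.le)] at this
      exact (ENNReal.ofReal_lt_ofReal_iff hδ).1 this
  have k1 := key ((Finset.range m).filter fun k => Even k) (Finset.filter_subset _ _) (by
    intro i hi j hj hij
    have hi := (Finset.mem_filter.1 hi).2
    have hj := (Finset.mem_filter.1 hj).2
    rw [Nat.even_iff] at hi hj
    omega)
  have k2 := key ((Finset.range m).filter fun k => ¬ Even k) (Finset.filter_subset _ _) (by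
    intro i hi j hj hij
    have hi := (Finset.mem_filter.1 hi).2
    have hj := (Finset.mem_filter.1 hj).2
    rw [Nat.not_even_iff] at hi hj
    omega)
  rw [← Finset.sum_filter_add_sum_filter_not (Finset.range m) (fun k => Even k)]
  linarith

/-- Mean value inequality on a time scale for an absolutely continuous function whose Δ-derivative
is bounded by `C` almost everywhere. -/
lemma mean_value {T : Set ℝ} (hT : IsClosed T) {a b C : ℝ} (ha : a ∈ T) (hb : b ∈ T)
    (hab : a ≤ b) (hC : 0 ≤ C) {r : ℝ → EuclideanSpace ℝ (Fin n)} (hac : DeltaAC T a b r)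
    (hrs : ∀ t ∈ T, a ≤ t → t < b → RightScattered T t →
      ‖r (tsSigma T t) - r t‖ ≤ C * tsGrain T t)
    (hrd : ∀ᵐ t, t ∈ Ioo a b ∩ T → RightDense T t → ∃ d, ‖d‖ ≤ C ∧ HasDeltaDerivAt T r d t) :
    ‖r b - r a‖ ≤ C * (b - a) := by
  suffices hmain : ∀ ε > 0, ‖r b - r a‖ ≤ (C + ε) * (b - a) + 2 * ε by
    have hlim : Tendsto (fun ε : ℝ => (C + ε) * (b - a) + 2 * ε) (nhdsWithin 0 (Ioi 0))
        (nhds (C * (b - a))) := by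
      have : Continuous fun ε : ℝ => (C + ε) * (b - a) + 2 * ε := by fun_prop
      have h := this.tendsto 0
      simp only [add_zero, mul_zero] at h
      exact h.mono_left nhdsWithin_le_nhds
    exact ge_of_tendsto hlim (by
      filter_upwards [self_mem_nhdsWithin] with ε hε using hmain ε hε)
  intro ε hε
  obtain ⟨δ, hδ, hvar⟩ := varSums_le hac hε
  -- the exceptional set, to which the endpoint `a` is added
  let E : Set ℝ := {a} ∪ {t | ¬ (t ∈ Ioo a b ∩ T → RightDense T t →
    ∃ d, ‖d‖ ≤ C ∧ HasDeltaDerivAt T r d t)}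
  have hE : volume E = 0 := by
    refine measure_union_null (by simp) ?_
    exact hrd
  obtain ⟨U, hEU, hUo, hUvol⟩ := E.exists_isOpen_lt_of_lt (ENNReal.ofReal δ)
    (by rw [hE]; simpa using hδ)
  have hbound := hvar U hUvol
  let φ : ℝ → ℝ := fun t => sSup (varSums T U r a t)
  have hbdd : ∀ t ≤ b, BddAbove (varSums T U r a t) := fun t ht =>
    ⟨2 * ε, fun x hx => hbound x (varSums_mono T U r a ht hx)⟩
  have hφmono : ∀ s t, s ≤ t → t ≤ b → φ s ≤ φ t := fun s t hst ht =>
    csSup_le_csSup (hbdd t ht) ⟨0, zero_mem_varSums _ _ _ _ _⟩ (varSums_mono T U r a hst)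
  have hφ0 : ∀ t ≤ b, 0 ≤ φ t := fun t ht => le_csSup (hbdd t ht) (zero_mem_varSums _ _ _ _ _)
  have hφb : φ b ≤ 2 * ε := csSup_le ⟨0, zero_mem_varSums _ _ _ _ _⟩ hbound
  have hcont := hac.continuousOn
  have hP := ts_induction hT (a := a) (b := b) ha
    (fun t => t ≤ b → ‖r t - r a‖ ≤ (C + ε) * (t - a) + φ t) ?_ ?_ ?_ hb b hb hab le_rfl le_rfl
  · linarith
  · intro _
    simpa using hφ0 a hab
  · intro t htT hat htb hPt
    have hPt := hPt htb.le
    rcases rightScattered_or_rightDense T t with hs | hd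
    · refine ⟨tsSigma T t, sigma_mem hT hs, hs, fun u hu htu hus hub => ?_⟩
      have hus' : u = tsSigma T t := le_antisymm hus (sigma_le hu htu)
      subst hus'
      have h1 := hrs t htT hat htb hs
      have h2 := hφmono _ _ htu.le hub
      have h3 : 0 ≤ ε * tsGrain T t := mul_nonneg hε.le (sub_nonneg.2 htu.le)
      unfold tsGrain at h1 h3
      calc ‖r (tsSigma T t) - r a‖ ≤ ‖r (tsSigma T t) - r t‖ + ‖r t - r a‖ := norm_sub_le_norm_sub_add_norm_sub _ _ _
        _ ≤ _ := by nlinarith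
    · by_cases hgood : t ∈ E
      · -- an exceptional point: the increment is charged to the variation inside `U`
        obtain ⟨η, hη, hball⟩ := Metric.isOpen_iff.1 hUo t (hEU hgood)
        obtain ⟨s, hsT, hts, hsη⟩ := hd.exists_near ⟨b, hb, htb⟩ (c := t + η) (by linarith)
        refine ⟨s, hsT, hts, fun u hu htu hus hub => ?_⟩
        have hsub : Icc t u ⊆ U := fun y hy => hball (by
          rw [Metric.mem_ball, Real.dist_eq, abs_of_nonneg (by linarith [hy.1])]
          linarith [hy.2])
        have h2 : φ t + ‖r u - r t‖ ≤ φ u := by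
          rw [← le_sub_iff_add_le]
          refine csSup_le ⟨0, zero_mem_varSums _ _ _ _ _⟩ fun x hx => ?_
          rw [le_sub_iff_add_le]
          exact le_csSup (hbdd u hub) (varSums_add hat htu htT hu hsub hx)
        have h3 : (C + ε) * (t - a) ≤ (C + ε) * (u - a) := by gcongr
        calc ‖r u - r a‖ ≤ ‖r u - r t‖ + ‖r t - r a‖ := norm_sub_le_norm_sub_add_norm_sub _ _ _
          _ ≤ _ := by linarith
      · have hta : t ≠ a := fun h => hgood (Or.inl h)
        have hg := not_not.1 fun h => hgood (Or.inr h)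
        obtain ⟨d, hdC, hder⟩ := hg ⟨⟨lt_of_le_of_ne hat hta.symm, htb⟩, htT⟩ hd
        obtain ⟨V, hV, hs⟩ := hder ε hε
        obtain ⟨η, hη, hball⟩ := Metric.mem_nhds_iff.1 hV
        obtain ⟨s, hsT, hts, hsη⟩ := hd.exists_near ⟨b, hb, htb⟩ (c := t + η) (by linarith)
        refine ⟨s, hsT, hts, fun u hu htu hus hub => ?_⟩
        have h1 := hs u ⟨hball (by
          rw [Metric.mem_ball, Real.dist_eq, abs_of_nonneg (by linarith)]; linarith), hu⟩
        rw [show tsSigma T t = t from hd, abs_sub_comm, abs_of_pos (by linarith : 0 < u - t)] at h1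
        have h2 : ‖r u - r t‖ ≤ (C + ε) * (u - t) := by
          have e : r u - r t = (u - t) • d - (r t - r u - (t - u) • d) := by module
          rw [e]
          refine (norm_sub_le _ _).trans ?_
          rw [norm_smul, Real.norm_of_nonneg (by linarith)]
          nlinarith
        have h3 := hφmono _ _ htu.le hub
        calc ‖r u - r a‖ ≤ ‖r u - r t‖ + ‖r t - r a‖ := norm_sub_le_norm_sub_add_norm_sub _ _ _
          _ ≤ _ := by linarith
  · intro t htT hat htb hP hnear _
    have hct : ContinuousWithinAt r (Icc a b ∩ T) t := hcont t ⟨⟨hat.le, htb⟩, htT⟩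
    refine le_of_forall_pos_le_add fun η hη => ?_
    obtain ⟨κ, hκ, hclose⟩ := Metric.continuousWithinAt_iff.1 hct η hη
    obtain ⟨u, hu, h1, h2⟩ := hnear (max a (t - κ)) (max_lt hat (by linarith))
    have hau := (le_max_left _ _).trans_lt h1
    have htu := (le_max_right _ _).trans_lt h1
    have h3 := hclose (x := u) ⟨⟨hau.le, h2.le.trans htb⟩, hu⟩ (by
      rw [Real.dist_eq, abs_sub_comm, abs_of_pos (by linarith)]; linarith)
    rw [dist_comm, dist_eq_norm] at h3
    have h4 := hP u hu hau.le h2 (h2.le.trans htb)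
    have h5 := hφmono u t h2.le htb
    have h6 : (C + ε) * (u - a) ≤ (C + ε) * (t - a) := by gcongr
    calc ‖r t - r a‖ ≤ ‖r t - r u‖ + ‖r u - r a‖ := norm_sub_le_norm_sub_add_norm_sub _ _ _
      _ ≤ _ := by linarith

/-! ### Solutions as arcs -/

/-- A solution of the dynamic equation on `[a,b]_𝕋` with the initial condition left out. It asks
for the jump relation at right-scattered points and for the Δ-derivative at almost every right-dense
point of `(a,b)_𝕋`. In contrast to `IsSolIcc`, nothing here involves values of `q`
outside `[a,b]_𝕋`, so that arcs can be cut and concatenated. -/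
structure IsArc (T : Set ℝ) (Ω : Set (EuclideanSpace ℝ (Fin n)))
    (f : EuclideanSpace ℝ (Fin n) → ℝ → EuclideanSpace ℝ (Fin n))
    (q : ℝ → EuclideanSpace ℝ (Fin n)) (a b : ℝ) : Prop where
  mem : ∀ t ∈ T, a ≤ t → t ≤ b → q t ∈ Ω
  ac : DeltaAC T a b q
  jump : ∀ t ∈ T, a ≤ t → t < b → RightScattered T t →
    q (tsSigma T t) = q t + tsGrain T t • f (q t) t
  der : ∀ᵐ t, t ∈ Ioo a b ∩ T → RightDense T t → HasDeltaDerivAt T q (f (q t) t) t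

variable {T : Set ℝ} {Ω : Set (EuclideanSpace ℝ (Fin n))}
  {f : EuclideanSpace ℝ (Fin n) → ℝ → EuclideanSpace ℝ (Fin n)}
  {p q : ℝ → EuclideanSpace ℝ (Fin n)} {a b c t₀ : ℝ} {q₀ : EuclideanSpace ℝ (Fin n)}

lemma IsArc.mono (h : IsArc T Ω f q a b) {a' b' : ℝ} (ha : a ≤ a') (hb : b' ≤ b) :
    IsArc T Ω f q a' b' where
  mem t ht h1 h2 := h.mem t ht (ha.trans h1) (h2.trans hb)
  ac := h.ac.mono ha hb
  jump t ht h1 h2 := h.jump t ht (ha.trans h1) (h2.trans_le hb)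
  der := by
    filter_upwards [h.der] with t ht h1
    exact ht ⟨Ioo_subset_Ioo ha hb h1.1, h1.2⟩

lemma IsArc.congr (h : IsArc T Ω f p a b) (hb : b ∈ T)
    (hpq : ∀ t ∈ T, a ≤ t → t ≤ b → p t = q t) (hT : IsClosed T) : IsArc T Ω f q a b where
  mem t ht h1 h2 := hpq t ht h1 h2 ▸ h.mem t ht h1 h2
  ac := h.ac.congr hpq
  jump t ht h1 h2 h3 := by
    rw [← hpq t ht h1 h2.le, ← hpq _ (sigma_mem hT h3) (h1.trans h3.le) (sigma_le hb h2)]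
    exact h.jump t ht h1 h2 h3
  der := by
    filter_upwards [h.der] with t ht h1 h2
    rw [← hpq t h1.2 h1.1.1.le h1.1.2.le]
    refine (ht h1 h2).congr (Ioo_mem_nhds h1.1.1 h1.1.2)
      (fun s hs => hpq s hs.2 hs.1.1.le hs.1.2.le) ?_
    rw [show tsSigma T t = t from h2]
    exact hpq t h1.2 h1.1.1.le h1.1.2.le

lemma IsArc.glue (h₁ : IsArc T Ω f q a c) (h₂ : IsArc T Ω f q c b) (hc : c ∈ T) :
    IsArc T Ω f q a b where
  mem t ht h1 h2 := (le_total t c).elim (h₁.mem t ht h1) (fun h => h₂.mem t ht h h2)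
  ac := h₁.ac.glue hc h₂.ac
  jump t ht h1 h2 := (lt_or_ge t c).elim (h₁.jump t ht h1) (fun h => h₂.jump t ht h h2)
  der := by
    have hne : ∀ᵐ t : ℝ, t ≠ c := by simp [ae_iff, measure_singleton]
    filter_upwards [h₁.der, h₂.der, hne] with t e1 e2 e3 h1
    rcases lt_or_gt_of_ne e3 with h | h
    · exact e1 ⟨⟨h1.1.1, h⟩, h1.2⟩
    · exact e2 ⟨⟨h, h1.1.2⟩, h1.2⟩

lemma IsSolIcc.isArc (hT : IsClosed T) (h : IsSolIcc T Ω f t₀ q₀ q a b) : IsArc T Ω f q a b := by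
  obtain ⟨h1, h2, _, h3⟩ := h
  rw [ae_delta_iff hT] at h3
  refine ⟨fun t ht e1 e2 => h1 t ⟨⟨e1, e2⟩, ht⟩, h2, fun t ht e1 e2 hs => ?_, ?_⟩
  · exact ((hasDeltaDerivAt_rs ht hs).1 (h3.2 t ⟨⟨e1, e2⟩, ht⟩ hs)).1
  · filter_upwards [h3.1] with t ht h4 _
    exact ht ⟨Ioo_subset_Ico_self h4.1, h4.2⟩

lemma IsArc.leftCont (h : IsArc T Ω f q a b) {t : ℝ} (ht : t ∈ T) (hat : a < t) (htb : t ≤ b) :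
    ContinuousWithinAt q (T ∩ Iic t) t := by
  have h1 : ContinuousWithinAt q (Icc a b ∩ T) t := h.ac.continuousOn t ⟨⟨hat.le, htb⟩, ht⟩
  refine h1.mono_of_mem_nhdsWithin ?_
  refine mem_nhdsWithin.2 ⟨Ioi a, isOpen_Ioi, hat, fun s hs => ?_⟩
  exact ⟨⟨le_of_lt hs.1, le_trans hs.2.2 htb⟩, hs.2.1⟩

/-- An arc is a solution as soon as it is left-continuous at a right-scattered initial endpoint;
that condition concerns the values of `q` to the left of `a`. -/
lemma IsArc.isSolIcc (hT : IsClosed T) (h : IsArc T Ω f q a b) (h0 : q t₀ = q₀)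
    (hleft : a ∈ T → RightScattered T a → ContinuousWithinAt q (T ∩ Iic a) a) :
    IsSolIcc T Ω f t₀ q₀ q a b := by
  refine ⟨fun t ht => h.mem t ht.2 ht.1.1 ht.1.2, h.ac, h0, ?_⟩
  rw [ae_delta_iff hT]
  have hrs : ∀ t ∈ Ico a b ∩ T, RightScattered T t → HasDeltaDerivAt T q (f (q t) t) t := by
    rintro t ⟨⟨h1, h2⟩, ht⟩ hs
    refine (hasDeltaDerivAt_rs ht hs).2 ⟨h.jump t ht h1 h2 hs, ?_⟩
    rcases h1.lt_or_eq with h1 | rfl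
    · exact h.leftCont ht h1 h2.le
    · exact hleft ht hs
  refine ⟨?_, hrs⟩
  have hne : ∀ᵐ t : ℝ, t ≠ a := by simp [ae_iff, measure_singleton]
  filter_upwards [h.der, hne] with t e1 e2 e3
  rcases rightScattered_or_rightDense T t with hs | hs
  · exact hrs t e3 hs
  · exact e1 ⟨⟨lt_of_le_of_ne e3.1.1 (Ne.symm e2), e3.1.2⟩, e3.2⟩ hs

/-- A single jump across a gap of the time scale is an arc. -/
lemma isArc_jump {t : ℝ} (ht : RightScattered T t) (h1 : q t ∈ Ω)
    (h2 : q (tsSigma T t) ∈ Ω) (h3 : q (tsSigma T t) = q t + tsGrain T t • f (q t) t) :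
    IsArc T Ω f q t (tsSigma T t) := by
  have hdich : ∀ s ∈ T, t ≤ s → s ≤ tsSigma T t → s = t ∨ s = tsSigma T t := by
    intro s hs e1 e2
    rcases e1.lt_or_eq with h | h
    · exact Or.inr (le_antisymm e2 (sigma_le hs h))
    · exact Or.inl h.symm
  refine ⟨fun s hs e1 e2 => ?_, ?_, fun s hs e1 e2 _ => ?_, ?_⟩
  · rcases hdich s hs e1 e2 with h | h <;> rwa [h]
  · have hpos : 0 < tsSigma T t - t := sub_pos.2 ht
    refine DeltaAC.of_lipschitz (M := ‖q (tsSigma T t) - q t‖ / (tsSigma T t - t)) (by positivity)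
      fun s hs s' hs' e1 e2 e3 => ?_
    rcases hdich s hs e1 (e2.trans e3) with h | h <;>
      rcases hdich s' hs' (e1.trans e2) e3 with h' | h' <;> subst h <;> subst h'
    · simp
    · rw [div_mul_cancel₀ _ hpos.ne']
    · linarith
    · simp
  · rcases hdich s hs e1 e2.le with h | h
    · rw [h]; exact h3
    · exact absurd h e2.ne
  · refine Filter.Eventually.of_forall fun s hs => ?_
    exact absurd (sigma_le hs.2 hs.1.1) (not_le.2 hs.1.2)

/-! ### Uniqueness -/

/-- On a short interval, two arcs staying in a set `B` where `f` is Lipschitz and agreeing at one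
point agree everywhere: the maximum of `‖p - q‖` is at most half of itself by the mean value
inequality. -/
lemma IsArc.eq_of_short (hT : IsClosed T)
    (hp : IsArc T Ω f p a b) (hq : IsArc T Ω f q a b)
    {B : Set (EuclideanSpace ℝ (Fin n))} {L : ℝ} (hL : 0 ≤ L) (hLab : L * (b - a) ≤ 1 / 2)
    (hlip : ∀ᵐ t ∂((deltaMeasure T).restrict (Ico a b ∩ T)),
      ∀ x ∈ B, ∀ y ∈ B, ‖f x t - f y t‖ ≤ L * ‖x - y‖)
    (hpB : ∀ t ∈ T, a ≤ t → t ≤ b → p t ∈ B) (hqB : ∀ t ∈ T, a ≤ t → t ≤ b → q t ∈ B)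
    (hc : c ∈ T) (hac : a ≤ c) (hcb : c ≤ b) (hpq : p c = q c) :
    ∀ t ∈ T, a ≤ t → t ≤ b → p t = q t := by
  rw [ae_delta_iff hT] at hlip
  have hrac : DeltaAC T a b (fun t => p t - q t) := hp.ac.sub hq.ac
  have hcomp : IsCompact (Icc a b ∩ T) := isCompact_Icc.inter_right hT
  obtain ⟨w, hw, hmax⟩ := hcomp.exists_isMaxOn ⟨c, ⟨hac, hcb⟩, hc⟩ hrac.continuousOn.norm
  have hmax' : ∀ t ∈ T, a ≤ t → t ≤ b → ‖p t - q t‖ ≤ ‖p w - q w‖ := fun t ht h1 h2 =>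
    isMaxOn_iff.1 hmax t ⟨⟨h1, h2⟩, ht⟩
  obtain ⟨m, hm⟩ : ∃ m, m = ‖p w - q w‖ := ⟨_, rfl⟩
  have hm0 : 0 ≤ m := hm ▸ norm_nonneg _
  rw [← hm] at hmax'
  have hmv : ∀ x ∈ T, ∀ y ∈ T, a ≤ x → x ≤ y → y ≤ b →
      ‖(p y - q y) - (p x - q x)‖ ≤ L * m * (y - x) := by
    intro x hx y hy hax hxy hyb
    refine mean_value (r := fun t => p t - q t) hT hx hy hxy (by positivity)
      (hrac.mono hax hyb) ?_ ?_
    · intro t ht hxt hty hs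
      have hat := hax.trans hxt
      have htb := hty.trans_le hyb
      have h1 := hlip.2 t ⟨⟨hat, htb⟩, ht⟩ hs _ (hpB t ht hat htb.le) _ (hqB t ht hat htb.le)
      have h2 := hmax' t ht hat htb.le
      have h3 : 0 ≤ tsGrain T t := sub_nonneg.2 hs.le
      have e : p (tsSigma T t) - q (tsSigma T t) - (p t - q t) =
          tsGrain T t • (f (p t) t - f (q t) t) := by
        rw [hp.jump t ht hat htb hs, hq.jump t ht hat htb hs]; module
      rw [e, norm_smul, Real.norm_of_nonneg h3, mul_comm]
      gcongr
      exact h1.trans (by gcongr)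
    · filter_upwards [hp.der, hq.der, hlip.1] with t e1 e2 e3 ht hd
      have hat := hax.trans_lt ht.1.1
      have htb := ht.1.2.trans_le hyb
      refine ⟨_, ?_, (e1 ⟨⟨hat, htb⟩, ht.2⟩ hd).sub (e2 ⟨⟨hat, htb⟩, ht.2⟩ hd)⟩
      refine (e3 ⟨⟨hat.le, htb⟩, ht.2⟩ _ (hpB t ht.2 hat.le htb.le) _
        (hqB t ht.2 hat.le htb.le)).trans ?_
      gcongr
      exact hmax' t ht.2 hat.le htb.le
  have hle : m ≤ L * m * (b - a) := by
    rcases le_total c w with h | h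
    · have := hmv c hc w hw.2 hac h hw.1.2
      rw [hpq, sub_self, sub_zero, ← hm] at this
      refine this.trans ?_
      gcongr
      exact hw.1.2
    · have := hmv w hw.2 c hc hw.1.1 h hcb
      rw [hpq, sub_self, zero_sub, norm_neg, ← hm] at this
      refine this.trans ?_
      gcongr
      exact hw.1.1
  have hm1 : m ≤ 0 := by nlinarith
  intro t ht h1 h2
  exact sub_eq_zero.1 (norm_le_zero_iff.1 ((hmax' t ht h1 h2).trans hm1))

lemma restrict_ico_mono (T : Set ℝ) {a b a' b' : ℝ} (ha : a ≤ a') (hb : b' ≤ b) {P : ℝ → Prop}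
    (h : ∀ᵐ t ∂((deltaMeasure T).restrict (Ico a b ∩ T)), P t) :
    ∀ᵐ t ∂((deltaMeasure T).restrict (Ico a' b' ∩ T)), P t :=
  ae_restrict_of_ae_restrict_of_subset
    (inter_subset_inter_left _ (Ico_subset_Ico ha hb)) h

lemma exists_short {L : ℝ} (hL : 0 ≤ L) : ∃ η > (0:ℝ), L * η ≤ 1 / 2 :=
  ⟨1 / (2 * (L + 1)), by positivity, by
    rw [mul_one_div, div_le_div_iff₀ (by positivity) (by norm_num)]; linarith⟩

/-- Two arcs issuing from the same point coincide to the right of it. -/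
lemma IsArc.eq_forward (hT : IsClosed T) (hrd : HrdLocLip T Ω f) (ha : a ∈ T) (hb : b ∈ T)
    (hp : IsArc T Ω f p a b) (hq : IsArc T Ω f q a b) (hpq : p a = q a) :
    ∀ t ∈ T, a ≤ t → t ≤ b → p t = q t := by
  intro t₁ ht₁ hat₁ ht₁b
  refine ts_induction hT (a := a) (b := b) ha (fun t => t ≤ b → p t = q t) (fun _ => hpq)
    ?_ ?_ hb t₁ ht₁ hat₁ ht₁b ht₁b
  · intro t ht hat htb hPt
    have hPt := hPt htb.le
    rcases rightScattered_or_rightDense T t with hs | hd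
    · refine ⟨tsSigma T t, sigma_mem hT hs, hs, fun u hu htu hus hub => ?_⟩
      have hus' : u = tsSigma T t := le_antisymm hus (sigma_le hu htu)
      rw [hus', hp.jump t ht hat htb hs, hq.jump t ht hat htb hs, hPt]
    · obtain ⟨R, hR, δ, hδ, L, hL, hball, hδT, hlip⟩ := hrd (p t) (hp.mem t ht hat htb.le) t ht
        (fun h => absurd (h.2 hb) (not_le.2 htb)) hd
      obtain ⟨η, hη, hLη⟩ := exists_short hL
      obtain ⟨κ₁, hκ₁, h1⟩ := Metric.continuousWithinAt_iff.1
        (hp.ac.continuousOn t ⟨⟨hat, htb.le⟩, ht⟩) R hR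
      obtain ⟨κ₂, hκ₂, h2⟩ := Metric.continuousWithinAt_iff.1
        (hq.ac.continuousOn t ⟨⟨hat, htb.le⟩, ht⟩) R hR
      obtain ⟨s, hsT, hts, hs⟩ := hd.exists_near ⟨b, hb, htb⟩
        (c := min b (t + min (min δ η) (min κ₁ κ₂)))
        (lt_min htb (by have : 0 < min (min δ η) (min κ₁ κ₂) := by positivity
                        linarith))
      have hsb : s < b := hs.trans_le (min_le_left _ _)
      have hs' : s - t < min (min δ η) (min κ₁ κ₂) := by
        have := hs.trans_le (min_le_right _ _); linarith
      obtain ⟨hm1, hm2⟩ := lt_min_iff.1 hs'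
      obtain ⟨hsδ, hsη⟩ := lt_min_iff.1 hm1
      obtain ⟨hsκ₁, hsκ₂⟩ := lt_min_iff.1 hm2
      refine ⟨s, hsT, hts, fun u hu htu hus _ => ?_⟩
      refine IsArc.eq_of_short hT (hp.mono hat hsb.le) (hq.mono hat hsb.le) hL
        ((mul_le_mul_of_nonneg_left hsη.le hL).trans hLη)
        (restrict_ico_mono T le_rfl (by linarith) hlip) (fun v hv e1 e2 => ?_)
        (fun v hv e1 e2 => ?_) ht le_rfl hts.le hPt u hu htu.le hus
      · refine (h1 (x := v) ⟨⟨hat.trans e1, e2.trans hsb.le⟩, hv⟩ ?_).le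
        rw [Real.dist_eq, abs_of_nonneg (by linarith)]; linarith
      · rw [hPt]
        refine (h2 (x := v) ⟨⟨hat.trans e1, e2.trans hsb.le⟩, hv⟩ ?_).le
        rw [Real.dist_eq, abs_of_nonneg (by linarith)]; linarith
  · intro t ht hat htb hP hnear _
    have hz : ContinuousWithinAt (fun s => p s - q s) (Icc a b ∩ T) t :=
      (hp.ac.sub hq.ac).continuousOn t ⟨⟨hat.le, htb⟩, ht⟩
    refine sub_eq_zero.1 (norm_le_zero_iff.1 (le_of_forall_pos_le_add fun ε hε => ?_))
    obtain ⟨κ, hκ, h1⟩ := Metric.continuousWithinAt_iff.1 hz ε hε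
    obtain ⟨u, hu, hcu, hut⟩ := hnear (max a (t - κ)) (max_lt hat (by linarith))
    obtain ⟨hau, hκu⟩ := max_lt_iff.1 hcu
    have h2 := h1 (x := u) ⟨⟨hau.le, hut.le.trans htb⟩, hu⟩ (by
      rw [Real.dist_eq, abs_sub_comm, abs_of_pos (by linarith)]; linarith)
    rw [hP u hu hau.le hut (hut.le.trans htb), sub_self, dist_zero_left] at h2
    linarith

/-- Two arcs arriving at the same point coincide to the left of it; jumps are inverted by the
injectivity part of `HbackRegr`. -/
lemma IsArc.eq_backward (hT : IsClosed T) (hld : HldLocLip T Ω f) (hreg : HbackRegr T Ω f)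
    (ha : a ∈ T) (hb : b ∈ T)
    (hp : IsArc T Ω f p a b) (hq : IsArc T Ω f q a b) (hpq : p b = q b) :
    ∀ t ∈ T, a ≤ t → t ≤ b → p t = q t := by
  intro t₁ ht₁ hat₁ ht₁b
  refine ts_induction_back hT (a := a) (b := b) hb (fun t => a ≤ t → p t = q t) (fun _ => hpq)
    ?_ ?_ ha t₁ ht₁ hat₁ ht₁b hat₁
  · intro t ht hat htb hPt
    have hPt := hPt hat.le
    rcases left_cases hT ht ⟨a, ha, hat⟩ with hd | ⟨s, hs, hrs, hst⟩
    swap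
    · have hslt : s < t := hst ▸ hrs
      refine ⟨s, hs, hslt, fun u hu hsu hut hau => ?_⟩
      have hus : u = s := by
        rcases hsu.lt_or_eq with h | h
        · exact absurd (sigma_le hu h) (not_le.2 (hst ▸ hut))
        · exact h.symm
      subst hus
      have hub := hslt.le.trans htb
      refine (hreg u hu hrs).injOn (hp.mem u hu hau hub) (hq.mem u hu hau hub) ?_
      have j1 := hp.jump u hu hau (hslt.trans_le htb) hrs
      have j2 := hq.jump u hu hau (hslt.trans_le htb) hrs
      rw [hst] at j1 j2
      show p u + tsGrain T u • f (p u) u = q u + tsGrain T u • f (q u) u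
      rw [← j1, ← j2, hPt]
    · obtain ⟨R, hR, δ, hδ, L, hL, hball, hδT, hlip⟩ := hld (p t) (hp.mem t ht hat.le htb) t ht
        (fun h => absurd (h.2 ha) (not_le.2 hat)) hd
      obtain ⟨η, hη, hLη⟩ := exists_short hL
      obtain ⟨κ₁, hκ₁, h1⟩ := Metric.continuousWithinAt_iff.1
        (hp.ac.continuousOn t ⟨⟨hat.le, htb⟩, ht⟩) R hR
      obtain ⟨κ₂, hκ₂, h2⟩ := Metric.continuousWithinAt_iff.1
        (hq.ac.continuousOn t ⟨⟨hat.le, htb⟩, ht⟩) R hR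
      obtain ⟨s, hsT, hs, hts⟩ := leftDense_near hd ⟨a, ha, hat⟩
        (c := max a (t - min (min δ η) (min κ₁ κ₂)))
        (max_lt hat (by have : 0 < min (min δ η) (min κ₁ κ₂) := by positivity
                        linarith))
      have hsb : a < s := (le_max_left _ _).trans_lt hs
      have hs' : t - s < min (min δ η) (min κ₁ κ₂) := by
        have := (le_max_right _ _).trans_lt hs; linarith
      obtain ⟨hm1, hm2⟩ := lt_min_iff.1 hs'
      obtain ⟨hsδ, hsη⟩ := lt_min_iff.1 hm1
      obtain ⟨hsκ₁, hsκ₂⟩ := lt_min_iff.1 hm2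
      refine ⟨s, hsT, hts, fun u hu hus htu _ => ?_⟩
      refine IsArc.eq_of_short hT (hp.mono hsb.le htb) (hq.mono hsb.le htb) hL
        ((mul_le_mul_of_nonneg_left hsη.le hL).trans hLη)
        (restrict_ico_mono T (by linarith) le_rfl hlip) (fun v hv e1 e2 => ?_)
        (fun v hv e1 e2 => ?_) ht hts.le le_rfl hPt u hu hus htu.le
      · refine (h1 (x := v) ⟨⟨hsb.le.trans e1, e2.trans htb⟩, hv⟩ ?_).le
        rw [Real.dist_eq, abs_sub_comm, abs_of_nonneg (by linarith)]; linarith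
      · rw [hPt]
        refine (h2 (x := v) ⟨⟨hsb.le.trans e1, e2.trans htb⟩, hv⟩ ?_).le
        rw [Real.dist_eq, abs_sub_comm, abs_of_nonneg (by linarith)]; linarith
  · intro t ht hat htb hP hnear _
    have hz : ContinuousWithinAt (fun s => p s - q s) (Icc a b ∩ T) t :=
      (hp.ac.sub hq.ac).continuousOn t ⟨⟨hat, htb.le⟩, ht⟩
    refine sub_eq_zero.1 (norm_le_zero_iff.1 (le_of_forall_pos_le_add fun ε hε => ?_))
    obtain ⟨κ, hκ, h1⟩ := Metric.continuousWithinAt_iff.1 hz ε hε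
    obtain ⟨u, hu, htu, huc⟩ := hnear (min b (t + κ)) (lt_min htb (by linarith))
    obtain ⟨hub, hκu⟩ := lt_min_iff.1 huc
    have h2 := h1 (x := u) ⟨⟨hat.trans htu.le, hub.le⟩, hu⟩ (by
      rw [Real.dist_eq, abs_of_pos (by linarith)]; linarith)
    rw [hP u hu htu hub.le (hat.trans htu.le), sub_self, dist_zero_left] at h2
    linarith

/-! ### Local existence -/

/-- The largest point of `T` in `[a, τ]` (for `a ∈ T` and `a ≤ τ`). Composition with this map turns
functions on the time scale into functions on a real interval, constant on the gaps of `T`, and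
turns the Δ-integral into the Lebesgue integral. -/
def tsFloor (T : Set ℝ) (a τ : ℝ) : ℝ := sSup (T ∩ Icc a (max a τ))

lemma tsFloor_mem (hT : IsClosed T) (ha : a ∈ T) (τ : ℝ) :
    tsFloor T a τ ∈ T ∩ Icc a (max a τ) :=
  (hT.inter isClosed_Icc).csSup_mem ⟨a, ha, le_rfl, le_max_left _ _⟩
    ⟨max a τ, fun _ h => h.2.2⟩

lemma tsFloor_mono (ha : a ∈ T) : Monotone (tsFloor T a) := fun _ τ h =>
  csSup_le_csSup ⟨max a τ, fun _ h => h.2.2⟩ ⟨a, ha, le_rfl, le_max_left _ _⟩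
    (inter_subset_inter_right _ (Icc_subset_Icc_right (max_le_max_left _ h)))

lemma le_tsFloor {s τ : ℝ} (hs : s ∈ T) (has : a ≤ s) (hsτ : s ≤ τ) : s ≤ tsFloor T a τ :=
  le_csSup ⟨max a τ, fun _ h => h.2.2⟩ ⟨hs, has, hsτ.trans (le_max_right _ _)⟩

lemma tsFloor_le (hT : IsClosed T) (ha : a ∈ T) {τ : ℝ} (h : a ≤ τ) : tsFloor T a τ ≤ τ := by
  simpa [h] using (tsFloor_mem hT ha τ).2.2

lemma tsFloor_eq_self (hT : IsClosed T) (ha : a ∈ T) {τ : ℝ} (hτ : τ ∈ T) (h : a ≤ τ) :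
    tsFloor T a τ = τ :=
  le_antisymm (tsFloor_le hT ha h) (le_tsFloor hτ h le_rfl)

lemma tsFloor_rightScattered (hT : IsClosed T) (ha : a ∈ T) (hb : b ∈ T) {τ : ℝ} (h : a ≤ τ)
    (hτb : τ < b) (hτ : τ ∉ T) : RightScattered T (tsFloor T a τ) := by
  have hm := tsFloor_mem hT ha τ
  have hlt : tsFloor T a τ < τ :=
    lt_of_le_of_ne (tsFloor_le hT ha h) (fun e => hτ (e ▸ hm.1))
  refine (rightScattered_of_gap hb hτb hlt fun s hs hsτ => ?_).1
  rcases le_total a s with h' | h'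
  · exact le_tsFloor hs h' hsτ
  · exact h'.trans hm.2.1

lemma tsFloor_eq_of_rightScattered (hT : IsClosed T) (ha : a ∈ T) {t τ : ℝ} (ht : t ∈ T)
    (hat : a ≤ t) (htτ : t ≤ τ) (hτ : τ < tsSigma T t) : tsFloor T a τ = t := by
  refine le_antisymm (not_lt.1 fun h => ?_) (le_tsFloor ht hat htτ)
  exact absurd (sigma_le (tsFloor_mem hT ha τ).1 h)
    (not_le.2 ((tsFloor_le hT ha (hat.trans htτ)).trans_lt hτ))

/-- Properties holding Δ-almost everywhere pull back to properties holding Lebesgue-almost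
everywhere, since `tsFloor` sends the gaps of `T` to right-scattered points. -/
lemma ae_tsFloor (hT : IsClosed T) (ha : a ∈ T) (hb : b ∈ T) {P : ℝ → Prop}
    (h : ∀ᵐ t ∂((deltaMeasure T).restrict (Ico a b ∩ T)), P t) :
    ∀ᵐ τ, τ ∈ Ico a b → P (tsFloor T a τ) := by
  rw [ae_delta_iff hT] at h
  filter_upwards [h.1] with τ h1 hτ
  by_cases hτT : τ ∈ T
  · rw [tsFloor_eq_self hT ha hτT hτ.1]
    exact h1 ⟨hτ, hτT⟩
  · have hm := tsFloor_mem hT ha τ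
    exact h.2 _ ⟨⟨hm.2.1, (tsFloor_le hT ha hτ.1).trans_lt hτ.2⟩, hm.1⟩
      (tsFloor_rightScattered hT ha hb hτ.1 hτ.2 hτT)

lemma restrict_up_mono (hb : b ∈ T) : Ico a b ∩ T ⊆ tsUpDomain T := fun _ ht =>
  ⟨ht.2, fun h => absurd (h.2 hb) (not_le.2 ht.1.2)⟩

lemma aemeasurable_floor (hT : IsClosed T) (ha : a ∈ T) (hb : b ∈ T)
    (hf : DeltaCaratheodory T Ω f) {x : EuclideanSpace ℝ (Fin n)} (hx : x ∈ Ω) :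
    AEMeasurable (fun τ => f x (tsFloor T a τ)) (volume.restrict (Ico a b)) := by
  have h : AEMeasurable (fun t => f x t) ((deltaMeasure T).restrict (Ico a b ∩ T)) :=
    (hf.1 x hx).mono_measure (Measure.restrict_mono (restrict_up_mono hb) le_rfl)
  refine ⟨fun τ => h.mk _ (tsFloor T a τ),
    h.measurable_mk.comp (tsFloor_mono ha).measurable, ?_⟩
  exact (ae_restrict_iff' measurableSet_Ico).2 (ae_tsFloor hT ha hb h.ae_eq_mk)

/-- The integrand of the Picard operator, obtained by transporting the right-hand side of the
equation along `y` to the real line. -/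
def picardRHS (T : Set ℝ) (f : EuclideanSpace ℝ (Fin n) → ℝ → EuclideanSpace ℝ (Fin n))
    (a b : ℝ) (y : ℝ → EuclideanSpace ℝ (Fin n)) : ℝ → EuclideanSpace ℝ (Fin n) :=
  (Ico a b).indicator fun τ => f (y (tsFloor T a τ)) (tsFloor T a τ)

/-- Carathéodory functions are superpositionally measurable: approximate `y` by simple functions
with values in `K` and use the continuity in the space variable. -/
lemma picardRHS_meas (hT : IsClosed T) (ha : a ∈ T) (hb : b ∈ T)
    (hf : DeltaCaratheodory T Ω f) {K : Set (EuclideanSpace ℝ (Fin n))} (hKΩ : K ⊆ Ω)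
    {y : ℝ → EuclideanSpace ℝ (Fin n)} (hy : Continuous y) (hyK : ∀ t, y t ∈ K) :
    AEStronglyMeasurable (picardRHS T f a b y) := by
  have hz : Measurable fun τ => y (tsFloor T a τ) :=
    hy.measurable.comp (tsFloor_mono ha).measurable
  refine AEMeasurable.aestronglyMeasurable ?_
  rw [picardRHS, aemeasurable_indicator_iff measurableSet_Ico]
  let φ := SimpleFunc.approxOn (fun τ => y (tsFloor T a τ)) hz K (y 0) (hyK 0)
  have hφK : ∀ k τ, φ k τ ∈ K := fun k τ => SimpleFunc.approxOn_mem hz (hyK 0) k τ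
  refine aemeasurable_of_tendsto_metrizable_ae atTop
    (f := fun k τ => f (φ k τ) (tsFloor T a τ)) (fun k => ?_) ?_
  · have hcov : (⋃ x : (φ k).range, φ k ⁻¹' {x.1}) = univ := by
      refine eq_univ_of_forall fun τ => mem_iUnion.2 ⟨⟨φ k τ, SimpleFunc.mem_range_self _ _⟩, rfl⟩
    rw [← Measure.restrict_univ (μ := volume.restrict (Ico a b)), ← hcov, aemeasurable_iUnion_iff]
    rintro ⟨x, hx⟩
    obtain ⟨τ₀, rfl⟩ := SimpleFunc.mem_range.1 hx
    have h := aemeasurable_floor hT ha hb hf (hKΩ (hφK k τ₀))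
    refine (h.mono_measure Measure.restrict_le_self).congr ?_
    refine (ae_restrict_iff' ((φ k).measurableSet_preimage _)).2 (Eventually.of_forall ?_)
    intro τ hτ
    simp only [show φ k τ = φ k τ₀ from hτ]
  · have hc := ae_restrict_of_ae_restrict_of_subset (restrict_up_mono (a := a) hb) hf.2
    refine (ae_restrict_iff' measurableSet_Ico).2 ?_
    filter_upwards [ae_tsFloor hT ha hb hc] with τ h1 hτ
    have hlim := SimpleFunc.tendsto_approxOn hz (hyK 0) (x := τ) (subset_closure (hyK _))
    refine ((h1 hτ) _ (hKΩ (hyK _))).tendsto.comp ?_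
    exact tendsto_nhdsWithin_iff.2 ⟨hlim, Eventually.of_forall fun k => hKΩ (hφK k τ)⟩

lemma HasDerivAt.hasDeltaDerivAt {q' : EuclideanSpace ℝ (Fin n)} {t : ℝ}
    (h : HasDerivAt q q' t) (hd : RightDense T t) : HasDeltaDerivAt T q q' t := by
  intro ε hε
  refine ⟨_, (hasDerivAt_iff_isLittleO.1 h).bound hε, fun s hs => ?_⟩
  have h1 := hs.1
  rw [show tsSigma T t = t from hd]
  simp only [mem_ofPred_eq, Real.norm_eq_abs] at h1
  rw [abs_sub_comm]
  refine le_trans (le_of_eq ?_) h1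
  rw [← norm_neg]
  congr 1
  module

/-- A function given on `[a,b]` by integrating the transported right-hand side is an arc. -/
lemma isArc_of_integral (hT : IsClosed T) (ha : a ∈ T) (hb : b ∈ T)
    {y : ℝ → EuclideanSpace ℝ (Fin n)} {s M : ℝ} {x₀ : EuclideanSpace ℝ (Fin n)}
    (hM : 0 ≤ M) (hG : Integrable (picardRHS T f a b y))
    (hGM : ∀ᵐ τ, ‖picardRHS T f a b y τ‖ ≤ M)
    (hq : ∀ t, q t = x₀ + ∫ τ in s..t, picardRHS T f a b y τ)
    (hqy : ∀ t ∈ Icc a b, q t = y t) (hqΩ : ∀ t ∈ Icc a b, q t ∈ Ω) : IsArc T Ω f q a b := by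
  have hdiff : ∀ t t', q t' - q t = ∫ τ in t..t', picardRHS T f a b y τ := by
    intro t t'
    rw [hq, hq, add_sub_add_left_eq_sub, intervalIntegral.integral_interval_sub_left] <;>
      exact hG.intervalIntegrable
  refine ⟨fun t _ h1 h2 => hqΩ t ⟨h1, h2⟩, ?_, ?_, ?_⟩
  · refine DeltaAC.of_lipschitz hM fun t _ t' _ _ h _ => ?_
    rw [hdiff]
    have := intervalIntegral.norm_integral_le_of_norm_le_const_ae (a := t) (b := t')
      (hGM.mono fun τ hτ _ => hτ)
    rwa [abs_of_nonneg (sub_nonneg.2 h)] at this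
  · intro t ht hat htb hs
    have hσb := sigma_le hb htb
    rw [← sub_eq_iff_eq_add', hdiff, hqy t ⟨hat, htb.le⟩, tsGrain,
      ← intervalIntegral.integral_const]
    refine intervalIntegral.integral_congr_ae ?_
    have hne : ∀ᵐ τ : ℝ, τ ≠ tsSigma T t := by simp [ae_iff, measure_singleton]
    filter_upwards [hne] with τ h1 h2
    rw [uIoc_of_le hs.le] at h2
    have h3 : τ < tsSigma T t := lt_of_le_of_ne h2.2 h1
    rw [picardRHS, indicator_of_mem (show τ ∈ Ico a b from ⟨hat.trans h2.1.le, h3.trans_le hσb⟩),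
      tsFloor_eq_of_rightScattered hT ha ht hat h2.1.le h3]
  · filter_upwards [LocallyIntegrable.ae_hasDerivAt_integral hG.locallyIntegrable] with t h1 h2 h3
    have h4 : HasDerivAt q (picardRHS T f a b y t) t := by
      have := (h1 s).const_add x₀
      rwa [show q = fun t => x₀ + ∫ τ in s..t, picardRHS T f a b y τ from funext hq]
    have h5 := HasDerivAt.hasDeltaDerivAt h4 h3
    rwa [picardRHS, indicator_of_mem (Ioo_subset_Ico_self h2.1), tsFloor_eq_self hT ha h2.2 h2.1.1.le,
      ← hqy t ⟨h2.1.1.le, h2.1.2.le⟩] at h5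


/-- Local existence on a short interval, with initial condition at either end: the Picard operator
is a contraction on the continuous functions from `[a,b]` to the ball. -/
lemma exists_isArc_of_short (hT : IsClosed T) (ha : a ∈ T) (hb : b ∈ T) (hab : a < b)
    (hf : DeltaCaratheodory T Ω f) {s : ℝ} (hs : s ∈ Icc a b)
    {x₀ : EuclideanSpace ℝ (Fin n)} {R M L : ℝ} (hR : 0 ≤ R)
    (hball : Metric.closedBall x₀ R ⊆ Ω) (hM : 0 ≤ M) (hL : 0 ≤ L)
    (hMb : ∀ᵐ t ∂((deltaMeasure T).restrict (Ico a b ∩ T)),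
      ∀ x ∈ Metric.closedBall x₀ R, ‖f x t‖ ≤ M)
    (hlip : ∀ᵐ t ∂((deltaMeasure T).restrict (Ico a b ∩ T)),
      ∀ x ∈ Metric.closedBall x₀ R, ∀ y ∈ Metric.closedBall x₀ R, ‖f x t - f y t‖ ≤ L * ‖x - y‖)
    (hMR : M * (b - a) ≤ R) (hLab : L * (b - a) ≤ 1 / 2) :
    ∃ q, q s = x₀ ∧ IsArc T Ω f q a b := by
  have hdist : ∀ t ∈ Icc a b, |t - s| ≤ b - a := fun t ht =>
    abs_sub_le_iff.2 ⟨by linarith [ht.2, hs.1], by linarith [ht.1, hs.2]⟩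
  -- extension of functions on `[a,b]` by constants
  let ext (φ : C(Icc a b, EuclideanSpace ℝ (Fin n))) : ℝ → EuclideanSpace ℝ (Fin n) :=
    fun t => φ (projIcc a b hab.le t)
  let S : Set C(Icc a b, EuclideanSpace ℝ (Fin n)) := {φ | ∀ t, φ t ∈ Metric.closedBall x₀ R}
  have hScl : IsClosed S := by
    have : S = ⋂ t, (fun φ : C(Icc a b, EuclideanSpace ℝ (Fin n)) => φ t) ⁻¹'
        Metric.closedBall x₀ R := by ext φ; simp [S]
    rw [this]
    exact isClosed_iInter fun t => Metric.isClosed_closedBall.preimage (by fun_prop)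
  have : CompleteSpace S := hScl.completeSpace_coe
  have : Nonempty S := ⟨⟨ContinuousMap.const _ x₀, fun t => Metric.mem_closedBall_self hR⟩⟩
  have hmeas : ∀ φ : S, AEStronglyMeasurable (picardRHS T f a b (ext φ)) := fun φ =>
    picardRHS_meas hT ha hb hf hball (by fun_prop) fun t => φ.2 _
  have hbd : ∀ φ : S, ∀ᵐ τ, ‖picardRHS T f a b (ext φ) τ‖ ≤ M := by
    intro φ
    filter_upwards [ae_tsFloor hT ha hb hMb] with τ h
    by_cases hτ : τ ∈ Ico a b
    · rw [picardRHS, indicator_of_mem hτ]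
      exact h hτ _ (φ.2 _)
    · rw [picardRHS, indicator_of_notMem hτ, norm_zero]
      exact hM
  have hGint : ∀ φ : S, Integrable (picardRHS T f a b (ext φ)) := by
    intro φ
    have h1 : IntegrableOn (picardRHS T f a b (ext φ)) (Ico a b) :=
      Measure.integrableOn_of_bounded (by simp) (hmeas φ) (ae_restrict_of_ae (hbd φ))
    have h2 := (integrable_indicator_iff measurableSet_Ico).2 h1
    rwa [picardRHS, indicator_indicator, inter_self] at h2
  have hex : ∀ φ : S, ∃ ψ : S, ∀ t : Icc a b,
      ψ.1 t = x₀ + ∫ τ in s..t, picardRHS T f a b (ext φ) τ := by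
    intro φ
    have hc : Continuous fun t : Icc a b => x₀ + ∫ τ in s..t, picardRHS T f a b (ext φ) τ :=
      continuous_const.add ((intervalIntegral.continuous_primitive
        (fun _ _ => (hGint φ).intervalIntegrable) s).comp continuous_subtype_val)
    refine ⟨⟨⟨_, hc⟩, fun t => ?_⟩, fun t => rfl⟩
    rw [mem_closedBall_iff_norm]
    simp only [ContinuousMap.coe_mk, add_sub_cancel_left]
    refine (intervalIntegral.norm_integral_le_of_norm_le_const_ae
      ((hbd φ).mono fun τ hτ _ => hτ)).trans (le_trans ?_ hMR)
    exact mul_le_mul_of_nonneg_left (hdist t t.2) hM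
  choose Φ hΦ using hex
  have hcontr : ContractingWith (1 / 2) Φ := by
    refine ⟨by norm_num, LipschitzWith.of_dist_le_mul fun φ ψ => ?_⟩
    rw [Subtype.dist_eq, ContinuousMap.dist_le (by positivity)]
    intro t
    rw [dist_eq_norm, hΦ, hΦ, add_sub_add_left_eq_sub, ← intervalIntegral.integral_sub
      (hGint φ).intervalIntegrable (hGint ψ).intervalIntegrable]
    have hae : ∀ᵐ τ, ‖picardRHS T f a b (ext φ) τ - picardRHS T f a b (ext ψ) τ‖ ≤
        L * dist φ ψ := by
      filter_upwards [ae_tsFloor hT ha hb hlip] with τ h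
      by_cases hτ : τ ∈ Ico a b
      · rw [picardRHS, picardRHS, indicator_of_mem hτ, indicator_of_mem hτ]
        refine (h hτ _ (φ.2 _) _ (ψ.2 _)).trans (mul_le_mul_of_nonneg_left ?_ hL)
        rw [← dist_eq_norm, Subtype.dist_eq]
        exact ContinuousMap.dist_apply_le_dist _
      · rw [picardRHS, picardRHS, indicator_of_notMem hτ, indicator_of_notMem hτ, sub_self,
          norm_zero]
        positivity
    refine (intervalIntegral.norm_integral_le_of_norm_le_const_ae
      (hae.mono fun τ hτ _ => hτ)).trans ?_
    have h1 : L * dist φ ψ * |t.1 - s| ≤ L * dist φ ψ * (b - a) :=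
      mul_le_mul_of_nonneg_left (hdist t t.2) (by positivity)
    have h2 : L * (b - a) * dist φ ψ ≤ 1 / 2 * dist φ ψ :=
      mul_le_mul_of_nonneg_right hLab dist_nonneg
    push_cast
    linarith
  set φ := hcontr.fixedPoint with hφ
  have hfix : Φ φ = φ := hcontr.fixedPoint_isFixedPt
  have heq : ∀ t (ht : t ∈ Icc a b),
      x₀ + ∫ τ in s..t, picardRHS T f a b (ext φ) τ = φ.1 ⟨t, ht⟩ := by
    intro t ht
    rw [← hΦ φ ⟨t, ht⟩, hfix]
  refine ⟨fun t => x₀ + ∫ τ in s..t, picardRHS T f a b (ext φ) τ, by simp, ?_⟩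
  refine isArc_of_integral hT ha hb hM (hGint φ) (hbd φ) (fun t => rfl) (fun t ht => ?_)
    (fun t ht => ?_)
  · simp only [heq t ht, ext, projIcc_of_mem hab.le ht]
  · simp only [heq t ht]
    exact hball (φ.2 _)

/-- A length `η` for which both smallness conditions of the Picard argument hold. -/
lemma exists_short₂ {L M R : ℝ} (hL : 0 ≤ L) (hM : 0 ≤ M) (hR : 0 < R) :
    ∃ η > (0:ℝ), L * η ≤ 1 / 2 ∧ M * η ≤ R := by
  obtain ⟨η, hη, h⟩ := exists_short hL
  refine ⟨min η (R / (M + 1)), by positivity, ?_, ?_⟩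
  · exact (mul_le_mul_of_nonneg_left (min_le_left _ _) hL).trans h
  · refine (mul_le_mul_of_nonneg_left (min_le_right _ _) hM).trans ?_
    rw [← mul_div_assoc, div_le_iff₀ (by positivity)]
    nlinarith

lemma exists_forward (hT : IsClosed T) (hf : DeltaCaratheodory T Ω f) (ht₀ : t₀ ∈ T)
    (hq₀ : q₀ ∈ Ω) (hg : ¬ IsGreatest T t₀) (hinf : HInfty T Ω f) (hrd : HrdLocLip T Ω f)
    (hst : HforwStab T Ω f) : ∃ b ∈ T, t₀ < b ∧ ∃ q, q t₀ = q₀ ∧ IsArc T Ω f q t₀ b := by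
  rcases rightScattered_or_rightDense T t₀ with hs | hd
  · refine ⟨tsSigma T t₀, sigma_mem hT hs, hs,
      fun t => if t = t₀ then q₀ else q₀ + tsGrain T t₀ • f q₀ t₀, by simp, ?_⟩
    have hne : tsSigma T t₀ ≠ t₀ := ne_of_gt hs
    apply isArc_jump hs <;> simp [hne, hq₀, hst t₀ ht₀ hs q₀ hq₀]
  · obtain ⟨R, hR, δ, hδ, L, hL, hball, hδT, hlip⟩ := hrd q₀ hq₀ t₀ ht₀ hg hd
    obtain ⟨M, hM, hMb⟩ := hinf _ hball (isCompact_closedBall q₀ R) t₀ ht₀ _ hδT (by linarith)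
    obtain ⟨η, hη, hLη, hMη⟩ := exists_short₂ hL hM hR
    obtain ⟨b, hb, htb, hbc⟩ := hd.exists_near (exists_gt_of_not_greatest ht₀ hg)
      (c := t₀ + min δ η) (by have : 0 < min δ η := by positivity
                              linarith)
    obtain ⟨h1, h2⟩ := lt_min_iff.1 (sub_lt_iff_lt_add'.2 hbc)
    exact ⟨b, hb, htb, exists_isArc_of_short hT ht₀ hb htb hf (left_mem_Icc.2 htb.le) hR.le hball
      hM hL (restrict_ico_mono T le_rfl (by linarith) hMb)
      (restrict_ico_mono T le_rfl (by linarith) hlip)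
      ((mul_le_mul_of_nonneg_left h2.le hM).trans hMη)
      ((mul_le_mul_of_nonneg_left h2.le hL).trans hLη)⟩

lemma exists_backward (hT : IsClosed T) (hf : DeltaCaratheodory T Ω f) (ht₀ : t₀ ∈ T)
    (hq₀ : q₀ ∈ Ω) (hg : ¬ IsLeast T t₀) (hinf : HInfty T Ω f) (hld : HldLocLip T Ω f)
    (hreg : HbackRegr T Ω f) : ∃ a ∈ T, a < t₀ ∧ ∃ q, q t₀ = q₀ ∧ IsArc T Ω f q a t₀ := by
  have hlt := exists_lt_of_not_least ht₀ hg
  rcases left_cases hT ht₀ hlt with hd | ⟨s, hs, hrs, hst⟩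
  · obtain ⟨R, hR, δ, hδ, L, hL, hball, hδT, hlip⟩ := hld q₀ hq₀ t₀ ht₀ hg hd
    obtain ⟨M, hM, hMb⟩ := hinf _ hball (isCompact_closedBall q₀ R) _ hδT t₀ ht₀ (by linarith)
    obtain ⟨η, hη, hLη, hMη⟩ := exists_short₂ hL hM hR
    obtain ⟨a, ha, hca, hat⟩ := leftDense_near hd hlt
      (c := t₀ - min δ η) (by have : 0 < min δ η := by positivity
                              linarith)
    obtain ⟨h1, h2⟩ := lt_min_iff.1 (sub_lt_comm.1 hca)
    exact ⟨a, ha, hat, exists_isArc_of_short hT ha ht₀ hat hf (right_mem_Icc.2 hat.le) hR.le hball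
      hM hL (restrict_ico_mono T (by linarith) le_rfl hMb)
      (restrict_ico_mono T (by linarith) le_rfl hlip)
      ((mul_le_mul_of_nonneg_left h2.le hM).trans hMη)
      ((mul_le_mul_of_nonneg_left h2.le hL).trans hLη)⟩
  · obtain ⟨x, hx, hxq⟩ := (hreg s hs hrs).surjOn (mem_univ q₀)
    have hlt' : s < t₀ := hst ▸ hrs
    have hne : t₀ ≠ s := ne_of_gt hlt'
    refine ⟨s, hs, hlt', fun t => if t = s then x else q₀, by simp [hne], ?_⟩
    have h := isArc_jump (T := T) (Ω := Ω) (f := f) (q := fun t => if t = s then x else q₀) hrs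
      (by simpa using hx) (by simp [hst, hne, hq₀]) (by simpa [hst, hne] using hxq.symm)
    rwa [hst] at h


/-! ### Solutions on intervals of the time scale -/

lemma Trile.le_left (h : Trile T t₀ a b) : a ≤ t₀ := by
  rcases h with ⟨_, h, _⟩ | ⟨_, h, _⟩ | ⟨_, _, h, _⟩
  exacts [h.le, h.le, h.le]

lemma Trile.le_right (h : Trile T t₀ a b) : t₀ ≤ b := by
  rcases h with ⟨_, _, h⟩ | ⟨_, _, h⟩ | ⟨_, _, _, h⟩
  exacts [h.le, h.le, h.le]

lemma Trile.lt (h : Trile T t₀ a b) : a < b := by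
  rcases h with ⟨_, h, h'⟩ | ⟨_, h, h'⟩ | ⟨_, _, h, h'⟩ <;> linarith

lemma Trile.replace_right (h : Trile T t₀ a b) {t : ℝ} (ht : t ∈ T) (htt : t₀ < t) :
    Trile T t₀ a t := by
  rcases h with ⟨h1, h2, _⟩ | ⟨h1, _, _⟩ | ⟨h1, h2, h3, _⟩
  · exact Or.inl ⟨h1, h2, htt⟩
  · exact absurd (h1.2 ht) (not_le.2 htt)
  · exact Or.inr (Or.inr ⟨h1, h2, h3, htt⟩)

lemma Trile.replace_left (h : Trile T t₀ a b) {t : ℝ} (ht : t ∈ T) (htt : t < t₀) :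
    Trile T t₀ t b := by
  rcases h with ⟨h1, _, _⟩ | ⟨h1, _, h3⟩ | ⟨h1, h2, _, h4⟩
  · exact absurd (h1.2 ht) (not_le.2 htt)
  · exact Or.inr (Or.inl ⟨h1, htt, h3⟩)
  · exact Or.inr (Or.inr ⟨h1, h2, htt, h4⟩)

lemma IsSol.mem_init {I : Set ℝ} (h : IsSol T Ω f t₀ q₀ q I) : t₀ ∈ I := by
  obtain ⟨⟨hI, a, ha, b, hb, hab⟩, _, _⟩ := h
  exact hI.out ha.1 hb.1 ⟨hab.le_left, hab.le_right⟩

lemma IsSol.init_eq {I : Set ℝ} (h : IsSol T Ω f t₀ q₀ q I) : q t₀ = q₀ := by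
  obtain ⟨⟨_, a, ha, b, hb, hab⟩, _, h⟩ := h
  exact (h a ha b hb hab).2.2.1

lemma IsSol.arc_right (hT : IsClosed T) {I : Set ℝ} (h : IsSol T Ω f t₀ q₀ q I) {t : ℝ}
    (ht : t ∈ I ∩ T) (htt : t₀ ≤ t) : IsArc T Ω f q t₀ t := by
  obtain ⟨⟨_, a, ha, b, hb, hab⟩, _, h⟩ := h
  rcases htt.lt_or_eq with htt | rfl
  · exact ((h a ha t ht (hab.replace_right ht.2 htt)).isArc hT).mono hab.le_left le_rfl
  · exact ((h a ha b hb hab).isArc hT).mono hab.le_left hab.le_right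

lemma IsSol.arc_left (hT : IsClosed T) {I : Set ℝ} (h : IsSol T Ω f t₀ q₀ q I) {t : ℝ}
    (ht : t ∈ I ∩ T) (htt : t ≤ t₀) : IsArc T Ω f q t t₀ := by
  obtain ⟨⟨_, a, ha, b, hb, hab⟩, _, h⟩ := h
  rcases htt.lt_or_eq with htt | rfl
  · exact ((h t ht b hb (hab.replace_left ht.2 htt)).isArc hT).mono le_rfl hab.le_right
  · exact ((h a ha b hb hab).isArc hT).mono hab.le_left hab.le_right

/-- Any two solutions agree wherever both are defined. -/
lemma IsSol.agree (hT : IsClosed T) (ht₀ : t₀ ∈ T)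
    (hfw : ¬ IsGreatest T t₀ → HrdLocLip T Ω f)
    (hbw : ¬ IsLeast T t₀ → HldLocLip T Ω f ∧ HbackRegr T Ω f)
    {I J : Set ℝ} (hp : IsSol T Ω f t₀ q₀ p I) (hq : IsSol T Ω f t₀ q₀ q J)
    {t : ℝ} (hI : t ∈ I) (hJ : t ∈ J) (ht : t ∈ T) : p t = q t := by
  have h0 : p t₀ = q t₀ := hp.init_eq.trans hq.init_eq.symm
  rcases lt_trichotomy t t₀ with h | rfl | h
  · obtain ⟨h1, h2⟩ := hbw fun hl => absurd (hl.2 ht) (not_le.2 h)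
    exact (hp.arc_left hT ⟨hI, ht⟩ h.le).eq_backward hT h1 h2 ht ht₀
      (hq.arc_left hT ⟨hJ, ht⟩ h.le) h0 t ht le_rfl h.le
  · exact h0
  · have h1 := hfw fun hl => absurd (hl.2 ht) (not_le.2 h)
    exact (hp.arc_right hT ⟨hI, ht⟩ h.le).eq_forward hT h1 ht₀ ht
      (hq.arc_right hT ⟨hJ, ht⟩ h.le) h0 t ht h.le le_rfl

/-- An arc becomes a solution after redefining it to be constant to the left of its interval. -/
lemma IsArc.exists_isSol (hT : IsClosed T) (ha : a ∈ T) (hb : b ∈ T) (hab : Trile T t₀ a b)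
    (h : IsArc T Ω f q a b) (h0 : q t₀ = q₀) : ∃ q' I, IsSol T Ω f t₀ q₀ q' I := by
  have h' : IsArc T Ω f (fun t => if t < a then q a else q t) a b :=
    h.congr hb (fun t _ hat _ => by simp [not_lt.2 hat]) hT
  refine ⟨_, Icc a b, ⟨ordConnected_Icc, a, ⟨left_mem_Icc.2 hab.lt.le, ha⟩, b,
    ⟨right_mem_Icc.2 hab.lt.le, hb⟩, hab⟩, fun t ht => h'.mem t ht.2 ht.1.1 ht.1.2,
    fun a' ha' b' hb' hab' => ?_⟩
  refine (h'.mono ha'.1.1 hb'.1.2).isSolIcc hT (by simp [not_lt.2 hab.le_left, h0])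
    fun haT _ => ?_
  rcases ha'.1.1.lt_or_eq with hlt | rfl
  · exact h'.leftCont haT hlt ha'.1.2
  · refine (continuousWithinAt_const (b := q a)).congr (fun s hs => ?_) (by simp)
    rcases (show s ≤ a from hs.2).lt_or_eq with hs | rfl
    · simp [hs]
    · simp

lemma exists_isSol (hT : IsClosed T) (hnt : T.Nontrivial) (hf : DeltaCaratheodory T Ω f)
    (ht₀ : t₀ ∈ T) (hq₀ : q₀ ∈ Ω)
    (hfw : ¬ IsGreatest T t₀ → HInfty T Ω f ∧ HrdLocLip T Ω f ∧ HforwStab T Ω f)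
    (hbw : ¬ IsLeast T t₀ → HInfty T Ω f ∧ HldLocLip T Ω f ∧ HbackRegr T Ω f) :
    ∃ q I, IsSol T Ω f t₀ q₀ q I := by
  have hlg : ¬ (IsLeast T t₀ ∧ IsGreatest T t₀) := fun ⟨h1, h2⟩ => by
    obtain ⟨x, hx, hxt⟩ := hnt.exists_ne t₀
    exact hxt (le_antisymm (h2.2 hx) (h1.2 hx))
  have hF : ¬ IsGreatest T t₀ → ∃ b ∈ T, t₀ < b ∧ ∃ q, q t₀ = q₀ ∧ IsArc T Ω f q t₀ b := fun h =>
    exists_forward hT hf ht₀ hq₀ h (hfw h).1 (hfw h).2.1 (hfw h).2.2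
  have hB : ¬ IsLeast T t₀ → ∃ a ∈ T, a < t₀ ∧ ∃ q, q t₀ = q₀ ∧ IsArc T Ω f q a t₀ := fun h =>
    exists_backward hT hf ht₀ hq₀ h (hbw h).1 (hbw h).2.1 (hbw h).2.2
  by_cases hl : IsLeast T t₀
  · obtain ⟨b, hb, hlt, q, h0, hq⟩ := hF fun hg => hlg ⟨hl, hg⟩
    exact hq.exists_isSol hT ht₀ hb (Or.inl ⟨hl, rfl, hlt⟩) h0
  by_cases hg : IsGreatest T t₀
  · obtain ⟨a, ha, hlt, q, h0, hq⟩ := hB hl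
    exact hq.exists_isSol hT ha ht₀ (Or.inr (Or.inl ⟨hg, hlt, rfl⟩)) h0
  obtain ⟨a, ha, hat, p, hp0, hp⟩ := hB hl
  obtain ⟨b, hb, htb, q, hq0, hq⟩ := hF hg
  have h1 : IsArc T Ω f (fun t => if t ≤ t₀ then p t else q t) a t₀ :=
    hp.congr ht₀ (fun t _ _ h => by simp [h]) hT
  have h2 : IsArc T Ω f (fun t => if t ≤ t₀ then p t else q t) t₀ b := by
    refine hq.congr hb (fun t _ h _ => ?_) hT
    rcases h.lt_or_eq with h | rfl
    · simp [not_le.2 h]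
    · simp [hp0, hq0]
  exact (h1.glue h2 ht₀).exists_isSol hT ha hb (Or.inr (Or.inr ⟨hl, hg, hat, htb⟩)) (by simp [hp0])

/-- There is a solution defined on the union of the intervals of all solutions and extending each
of them. -/
lemma exists_largest (hT : IsClosed T) (hnt : T.Nontrivial) (hf : DeltaCaratheodory T Ω f)
    (ht₀ : t₀ ∈ T) (hq₀ : q₀ ∈ Ω)
    (hfw : ¬ IsGreatest T t₀ → HInfty T Ω f ∧ HrdLocLip T Ω f ∧ HforwStab T Ω f)
    (hbw : ¬ IsLeast T t₀ → HInfty T Ω f ∧ HldLocLip T Ω f ∧ HbackRegr T Ω f) :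
    ∃ Q J, IsSol T Ω f t₀ q₀ Q J ∧ ∀ q I, IsSol T Ω f t₀ q₀ q I → SolExtends T Q J q I := by
  have hagree : ∀ p I q J, IsSol T Ω f t₀ q₀ p I → IsSol T Ω f t₀ q₀ q J →
      ∀ t, t ∈ I → t ∈ J → t ∈ T → p t = q t := fun p I q J hp hq t hI hJ ht =>
    hp.agree hT ht₀ (fun h => (hfw h).2.1) (fun h => (hbw h).2) hq hI hJ ht
  obtain ⟨p₀, I₀, hp₀⟩ := exists_isSol hT hnt hf ht₀ hq₀ hfw hbw
  obtain ⟨J, hJ⟩ : ∃ J : Set ℝ, ∀ t, t ∈ J ↔ ∃ q I, IsSol T Ω f t₀ q₀ q I ∧ t ∈ I :=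
    ⟨{t | ∃ q I, IsSol T Ω f t₀ q₀ q I ∧ t ∈ I}, fun _ => Iff.rfl⟩
  -- If `J ∩ T` has a least point `m`, then solutions must be left-continuous at `m` when `m` is
  -- right-scattered; so to the left of `m` the function `Q` has to follow one of the solutions.
  obtain ⟨Q, hQ, hQm⟩ : ∃ Q : ℝ → EuclideanSpace ℝ (Fin n),
      (∀ q I, IsSol T Ω f t₀ q₀ q I → ∀ t ∈ I ∩ T, Q t = q t) ∧
      ∀ m, IsLeast (J ∩ T) m → ∃ q I, IsSol T Ω f t₀ q₀ q I ∧ m ∈ I ∧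
        ∀ t ∈ T, t ≤ m → Q t = q t := by
    have hch : ∀ t, ∃ x, ∀ q I, IsSol T Ω f t₀ q₀ q I → t ∈ I ∩ T → x = q t := by
      intro t
      by_cases h : ∃ q I, IsSol T Ω f t₀ q₀ q I ∧ t ∈ I
      · obtain ⟨q, I, hq, htI⟩ := h
        exact ⟨q t, fun q' I' hq' ht' => hagree _ _ _ _ hq hq' t htI ht'.1 ht'.2⟩
      · exact ⟨0, fun q I hq ht => absurd ⟨q, I, hq, ht.1⟩ h⟩
    choose Q₁ hQ₁ using hch
    by_cases hm : ∃ m, IsLeast (J ∩ T) m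
    · obtain ⟨m, hm⟩ := hm
      obtain ⟨q, I, hq, hmI⟩ := (hJ m).1 hm.1.1
      refine ⟨fun t => if t ∈ J then Q₁ t else q t, fun q' I' hq' t ht => ?_, fun m' hm' => ?_⟩
      · simp only [(hJ t).2 ⟨q', I', hq', ht.1⟩, if_true]
        exact hQ₁ t q' I' hq' ht
      · obtain rfl := hm.unique hm'
        refine ⟨q, I, hq, hmI, fun t ht htm => ?_⟩
        by_cases htJ : t ∈ J
        · obtain rfl := le_antisymm htm (hm.2 ⟨htJ, ht⟩)
          simp only [htJ, if_true]
          exact hQ₁ t q I hq ⟨hmI, ht⟩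
        · simp [htJ]
    · exact ⟨Q₁, fun q I hq t ht => hQ₁ t q I hq ht, fun m h => absurd ⟨m, h⟩ hm⟩
  have hleft : ∀ t ∈ J ∩ T, t ≤ t₀ → IsArc T Ω f Q t t₀ := by
    intro t ht htt
    obtain ⟨q, I, hq, htI⟩ := (hJ t).1 ht.1
    refine (hq.arc_left hT ⟨htI, ht.2⟩ htt).congr ht₀ (fun s hs h1 h2 => ?_) hT
    exact (hQ q I hq s ⟨hq.1.1.out htI hq.mem_init ⟨h1, h2⟩, hs⟩).symm
  have hright : ∀ t ∈ J ∩ T, t₀ ≤ t → IsArc T Ω f Q t₀ t := by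
    intro t ht htt
    obtain ⟨q, I, hq, htI⟩ := (hJ t).1 ht.1
    refine (hq.arc_right hT ⟨htI, ht.2⟩ htt).congr ht.2 (fun s hs h1 h2 => ?_) hT
    exact (hQ q I hq s ⟨hq.1.1.out hq.mem_init htI ⟨h1, h2⟩, hs⟩).symm
  refine ⟨Q, J, ⟨⟨⟨fun x hx y hy z hz => ?_⟩, ?_⟩, fun t ht => ?_, fun a ha b hb hab => ?_⟩, ?_⟩
  · rcases le_total z t₀ with h | h
    · obtain ⟨q, I, hq, hxI⟩ := (hJ x).1 hx
      exact (hJ z).2 ⟨q, I, hq, hq.1.1.out hxI hq.mem_init ⟨hz.1, h⟩⟩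
    · obtain ⟨q, I, hq, hyI⟩ := (hJ y).1 hy
      exact (hJ z).2 ⟨q, I, hq, hq.1.1.out hq.mem_init hyI ⟨h, hz.2⟩⟩
  · obtain ⟨a, ha, b, hb, hab⟩ := hp₀.1.2
    exact ⟨a, ⟨(hJ a).2 ⟨p₀, I₀, hp₀, ha.1⟩, ha.2⟩, b, ⟨(hJ b).2 ⟨p₀, I₀, hp₀, hb.1⟩, hb.2⟩, hab⟩
  · obtain ⟨q, I, hq, htI⟩ := (hJ t).1 ht.1
    rw [hQ q I hq t ⟨htI, ht.2⟩]
    exact hq.2.1 t ⟨htI, ht.2⟩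
  · have hQ0 : Q t₀ = q₀ := (hQ p₀ I₀ hp₀ t₀ ⟨hp₀.mem_init, ht₀⟩).trans hp₀.init_eq
    refine ((hleft a ha hab.le_left).glue (hright b hb hab.le_right) ht₀).isSolIcc hT hQ0
      fun haT hrs => ?_
    by_cases hex : ∃ a' ∈ J ∩ T, a' < a
    · obtain ⟨a', ha', hlt⟩ := hex
      exact (hleft a' ha' (hlt.le.trans hab.le_left)).leftCont haT hlt hab.le_left
    · obtain ⟨q, I, hq, haI, heq⟩ := hQm a ⟨ha, fun s hs => not_lt.1 fun h => hex ⟨s, hs, h⟩⟩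
      obtain ⟨a₁, ha₁, b₁, hb₁, hab₁⟩ := hq.1.2
      have hab₂ : Trile T t₀ a b₁ := by
        rcases hab.le_left.lt_or_eq with h | h
        · exact hab₁.replace_left haT h
        · rcases hab with ⟨hl, _, _⟩ | ⟨_, h', _⟩ | ⟨_, _, h', _⟩
          · rwa [h.trans (le_antisymm (hl.2 ha₁.2) hab₁.le_left)]
          · exact absurd h h'.ne
          · exact absurd h h'.ne
      have hd := ((ae_delta_iff hT _ _ _).1 (hq.2.2 a ⟨haI, haT⟩ b₁ hb₁ hab₂).2.2.2).2 a
        ⟨⟨le_rfl, hab₂.lt⟩, haT⟩ hrs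
      exact ((hasDeltaDerivAt_rs haT hrs).1 hd).2.congr (fun s hs => heq s hs.1 hs.2)
        (heq a haT le_rfl)
  · intro q I hq
    exact ⟨fun t ht => ⟨(hJ t).2 ⟨q, I, hq, ht.1⟩, ht.2⟩, fun t ht => hQ q I hq t ht⟩

end

theorem stmt2 {n : ℕ}
    (T : Set ℝ) (hTclosed : IsClosed T) (hTnontriv : T.Nontrivial)
    (Ω : Set (EuclideanSpace ℝ (Fin n))) (hΩopen : IsOpen Ω) (hΩne : Ω.Nonempty)
    (f : EuclideanSpace ℝ (Fin n) → ℝ → EuclideanSpace ℝ (Fin n)) (hf : DeltaCaratheodory T Ω f)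
    (t₀ : ℝ) (ht₀ : t₀ ∈ T) (q₀ : EuclideanSpace ℝ (Fin n)) (hq₀ : q₀ ∈ Ω)
    (h1 : IsLeast T t₀ → HInfty T Ω f ∧ HrdLocLip T Ω f ∧ HforwStab T Ω f)
    (h2 : IsGreatest T t₀ → HInfty T Ω f ∧ HldLocLip T Ω f ∧ HbackRegr T Ω f)
    (h3 : ¬ IsLeast T t₀ → ¬ IsGreatest T t₀ →
      HInfty T Ω f ∧ HrdLocLip T Ω f ∧ HforwStab T Ω f ∧ HldLocLip T Ω f ∧ HbackRegr T Ω f) :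
    ∃ (q : ℝ → EuclideanSpace ℝ (Fin n)) (I : Set ℝ),
      IsMaxSol T Ω f t₀ q₀ q I ∧
      (∀ q₁ I₁, IsMaxSol T Ω f t₀ q₀ q₁ I₁ → I₁ ∩ T = I ∩ T ∧ EqOn q₁ q (I ∩ T)) ∧
      (∀ q₁ I₁, IsSol T Ω f t₀ q₀ q₁ I₁ → SolExtends T q I q₁ I₁) := by
  have hfw : ¬ IsGreatest T t₀ → HInfty T Ω f ∧ HrdLocLip T Ω f ∧ HforwStab T Ω f := fun hg => by
    by_cases hl : IsLeast T t₀
    · exact h1 hl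
    · exact ⟨(h3 hl hg).1, (h3 hl hg).2.1, (h3 hl hg).2.2.1⟩
  have hbw : ¬ IsLeast T t₀ → HInfty T Ω f ∧ HldLocLip T Ω f ∧ HbackRegr T Ω f := fun hl => by
    by_cases hg : IsGreatest T t₀
    · exact h2 hg
    · exact ⟨(h3 hl hg).1, (h3 hl hg).2.2.2⟩
  obtain ⟨q, I, hq, hext⟩ := exists_largest hTclosed hTnontriv hf ht₀ hq₀ hfw hbw
  refine ⟨q, I, ⟨hq, fun q₁ I₁ h h' => ?_⟩, fun q₁ I₁ h => ?_, hext⟩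
  · exact Subset.antisymm (hext q₁ I₁ h).1 h'.1
  · have h' := hext q₁ I₁ h.1
    have he : I ∩ T = I₁ ∩ T := h.2 q I hq h'
    exact ⟨he.symm, fun t ht => (h'.2 (he ▸ ht)).symm⟩

end
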